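/- arXiv:1507.05929 — 2 statements merged into one kernel-verified Lean document; each statement's English description precedes it below -/
import Mathlib

section
/- Fix r ∈ (0,1), a unit vector y ∈ ℝ^d, λ ∈ (2r-1, 1) with λ > 0, η > 0, and n ∈ ℕ. For each m and corpus X of unit vectors with |X| = n, define the event G := {for every x ∈ X: if ⟨x,y⟩ ≥ λ + ε_m(λ,η,r) then S_m(x,y) ≥ μ_m(λ), and if ⟨x,y⟩ ≤ λ - ε_m(λ,η,r) then S_m(x,y) ≤ μ_m(λ)}. Then lim_{m→∞} sup_{|X|=n} P(Gᶜ) ≤ n·P(N(0,1) ≥ η). -/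
open MeasureTheory ProbabilityTheory Filter Topology

noncomputable section

/-- Centered bivariate Gaussian pair `(w, v)` in which `w` and `v` are each standard
normal and `E[w v] = lam`, realized as the law of `(z₁, lam·z₁ + √(1-lam²)·z₂)`
for independent standard normals `z₁, z₂`. -/
def gaussPair (lam : ℝ) : Measure (ℝ × ℝ) :=
  Measure.map (fun z : ℝ × ℝ => (z.1, lam * z.1 + Real.sqrt (1 - lam ^ 2) * z.2))
    ((gaussianReal 0 1).prod (gaussianReal 0 1))

/-- `μ(λ,h) = P(w ≥ h ∧ v ≥ h)`. -/
def mu (lam h : ℝ) : ℝ := (gaussPair lam {p : ℝ × ℝ | h ≤ p.1 ∧ h ≤ p.2}).toReal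

/-- `σ(λ,h) = sqrt(μ(λ,h)(1-μ(λ,h)))`. -/
def sigma' (lam h : ℝ) : ℝ := Real.sqrt (mu lam h * (1 - mu lam h))

/-- The threshold `h_m = sqrt(2 r log m)`. -/
def hthr (r : ℝ) (m : ℕ) : ℝ := Real.sqrt (2 * r * Real.log m)

/-- `μ_m(λ) = μ(λ, h_m)`. -/
def muM (r : ℝ) (m : ℕ) (lam : ℝ) : ℝ := mu lam (hthr r m)

/-- `σ_m(λ) = σ(λ, h_m)`. -/
def sigM (r : ℝ) (m : ℕ) (lam : ℝ) : ℝ := sigma' lam (hthr r m)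

/-- Canonical probability space carrying `m` i.i.d. random vectors in `ℝ^d`
whose coordinates are i.i.d. standard normal: `a_i ω := ω i`. -/
def Prob (d m : ℕ) : Measure (Fin m → Fin d → ℝ) :=
  Measure.pi fun _ => Measure.pi fun _ : Fin d => gaussianReal 0 1

/-- Euclidean inner product on `ℝ^d`. -/
def dotp {d : ℕ} (a x : Fin d → ℝ) : ℝ := ∑ j, a j * x j

/-- `x` lies on the unit sphere `S^{d-1}`. -/
def unitVec {d : ℕ} (x : Fin d → ℝ) : Prop := ∑ j, x j ^ 2 = 1

/-- The score `S_m(x,y) = (1/m) ∑_i 1[⟨a_i,x⟩ ≥ h_m]·1[⟨a_i,y⟩ ≥ h_m]`. -/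
def score (d m : ℕ) (r : ℝ) (x y : Fin d → ℝ) (ω : Fin m → Fin d → ℝ) : ℝ :=
  (1 / (m : ℝ)) * ∑ i, (if hthr r m ≤ dotp (ω i) x then (1 : ℝ) else 0) *
    (if hthr r m ≤ dotp (ω i) y then (1 : ℝ) else 0)

/-- The standard normal cumulative distribution function `Φ`. -/
def Phi (t : ℝ) : ℝ := (gaussianReal 0 1 (Set.Iic t)).toReal

/-- The standard normal upper tail `P(N(0,1) ≥ t)`. -/
def gaussTail (t : ℝ) : ℝ := (gaussianReal 0 1 {z : ℝ | t ≤ z}).toReal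

/-- `ε_m(λ,η,r) = C(λ,r,m,η)·m^{-(λ-(2r-1))/(2(1+λ))}` with
`C = √(2π)·(1+λ)·(1-λ²)^{1/4}·η/√(2r log m)`. -/
def epsm (r lam eta : ℝ) (m : ℕ) : ℝ :=
  (Real.sqrt (2 * Real.pi) * (1 + lam) * (1 - lam ^ 2) ^ ((1 : ℝ) / 4) * eta /
    Real.sqrt (2 * r * Real.log m)) * (m : ℝ) ^ (-(lam - (2 * r - 1)) / (2 * (1 + lam)))


theorem integral_exp_gauss (c : ℝ) :
    ∫ a, Complex.exp (c * a * Complex.I) ∂(gaussianReal 0 1) = Complex.exp (-(c ^ 2 : ℝ) / 2) := by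
  have := charFun_gaussianReal (μ := 0) (v := 1) c
  rw [charFun_apply_real] at this
  rw [this]
  congr 1
  push_cast
  simp
  ring

theorem integral_exp_pi {d : ℕ} (c : Fin d → ℝ) :
    ∫ a, Complex.exp ((dotp a c : ℝ) * Complex.I) ∂(Measure.pi fun _ : Fin d => gaussianReal 0 1)
      = Complex.exp (-(∑ j, c j ^ 2 : ℝ) / 2) := by
  have h : ∀ a : Fin d → ℝ, Complex.exp ((dotp a c : ℝ) * Complex.I)
      = ∏ j, Complex.exp (c j * a j * Complex.I) := by
    intro a
    rw [← Complex.exp_sum]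
    congr 1
    simp only [dotp]
    push_cast
    rw [Finset.sum_mul]
    exact Finset.sum_congr rfl fun j _ => by ring
  simp_rw [h]
  rw [integral_fintype_prod_eq_prod (𝕜 := ℂ) (fun j (a : ℝ) => Complex.exp (c j * a * Complex.I))]
  simp_rw [integral_exp_gauss]
  rw [← Complex.exp_sum]
  congr 1
  push_cast
  rw [← Finset.sum_neg_distrib, Finset.sum_div]

theorem measurable_dotp {d : ℕ} (x : Fin d → ℝ) : Measurable (fun a : Fin d → ℝ => dotp a x) := by
  unfold dotp; fun_prop

theorem abs_dotp_le {d : ℕ} {x y : Fin d → ℝ} (hx : unitVec x) (hy : unitVec y) :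
    dotp x y ^ 2 ≤ 1 := by
  have := Finset.sum_mul_sq_le_sq_mul_sq Finset.univ x y
  unfold unitVec at hx hy
  unfold dotp
  rw [hx, hy] at this
  linarith

theorem map_pair {d : ℕ} {x y : Fin d → ℝ} (hx : unitVec x) (hy : unitVec y) :
    Measure.map (fun a => (dotp a x, dotp a y)) (Measure.pi fun _ : Fin d => gaussianReal 0 1)
      = gaussPair (dotp x y) := by
  have m1 : Measurable (fun a : Fin d → ℝ => (dotp a x, dotp a y)) :=
    (measurable_dotp x).prodMk (measurable_dotp y)
  have m2 : Measurable (fun z : ℝ × ℝ => (z.1, dotp x y * z.1 + Real.sqrt (1 - dotp x y ^ 2) * z.2)) := by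
    fun_prop
  have : IsProbabilityMeasure (gaussPair (dotp x y)) :=
    Measure.isProbabilityMeasure_map m2.aemeasurable
  have : IsProbabilityMeasure (Measure.map (fun a => (dotp a x, dotp a y)) (Measure.pi fun _ : Fin d => gaussianReal 0 1)) :=
    Measure.isProbabilityMeasure_map m1.aemeasurable
  refine Measure.ext_of_charFunDual ?_
  ext L
  set s := L (1, 0) with hs
  set t := L (0, 1) with ht
  have hL : ∀ p : ℝ × ℝ, L p = s * p.1 + t * p.2 := by
    intro p
    have : p = p.1 • ((1 : ℝ), (0 : ℝ)) + p.2 • ((0 : ℝ), (1 : ℝ)) := by ext <;> simp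
    conv_lhs => rw [this]
    rw [map_add, map_smul, map_smul]
    simp [hs, ht, mul_comm]
  rw [charFunDual_apply, charFunDual_apply, gaussPair,
    integral_map m1.aemeasurable (by fun_prop), integral_map m2.aemeasurable (by fun_prop)]
  simp_rw [hL]
  have e1 : ∀ a : Fin d → ℝ, s * dotp a x + t * dotp a y = dotp a (fun j => s * x j + t * y j) := by
    intro a
    simp only [dotp, Finset.mul_sum, ← Finset.sum_add_distrib]
    exact Finset.sum_congr rfl fun j _ => by ring
  simp_rw [e1, integral_exp_pi]
  set ρ := dotp x y with hρ
  have e2 : ∀ z : ℝ × ℝ, Complex.exp ((s * z.1 + t * (ρ * z.1 + Real.sqrt (1 - ρ ^ 2) * z.2) : ℝ) * Complex.I)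
    = Complex.exp (((s + t * ρ : ℝ) : ℂ) * z.1 * Complex.I) *
      Complex.exp (((t * Real.sqrt (1 - ρ ^ 2) : ℝ) : ℂ) * z.2 * Complex.I) := by
    intro z
    rw [← Complex.exp_add]
    congr 1
    push_cast
    ring
  simp_rw [e2]
  rw [integral_prod_mul (fun a : ℝ => Complex.exp (((s + t * ρ : ℝ) : ℂ) * a * Complex.I))
    (fun a : ℝ => Complex.exp (((t * Real.sqrt (1 - ρ ^ 2) : ℝ) : ℂ) * a * Complex.I)),
    integral_exp_gauss, integral_exp_gauss, ← Complex.exp_add]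
  congr 1
  have e3 : ∑ j, (s * x j + t * y j) ^ 2 = (s + t * ρ) ^ 2 + (t * Real.sqrt (1 - ρ ^ 2)) ^ 2 := by
    rw [mul_pow, Real.sq_sqrt (by have := abs_dotp_le hx hy; linarith)]
    have : ∑ j, (s * x j + t * y j) ^ 2
        = s ^ 2 * ∑ j, x j ^ 2 + 2 * s * t * ρ + t ^ 2 * ∑ j, y j ^ 2 := by
      rw [hρ, dotp, Finset.mul_sum, Finset.mul_sum, Finset.mul_sum, ← Finset.sum_add_distrib,
        ← Finset.sum_add_distrib]
      exact Finset.sum_congr rfl fun j _ => by ring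
    rw [this, hx, hy]
    ring
  rw [e3]
  push_cast
  ring

theorem prob_pair {d : ℕ} {x y : Fin d → ℝ} (hx : unitVec x) (hy : unitVec y) (h : ℝ) :
    ((Measure.pi fun _ : Fin d => gaussianReal 0 1) {a | h ≤ dotp a x ∧ h ≤ dotp a y}).toReal
      = mu (dotp x y) h := by
  have m1 : Measurable (fun a : Fin d → ℝ => (dotp a x, dotp a y)) :=
    (measurable_dotp x).prodMk (measurable_dotp y)
  rw [mu, ← map_pair hx hy, Measure.map_apply m1]
  · rfl
  · exact (measurableSet_le measurable_const measurable_fst).inter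
      (measurableSet_le measurable_const measurable_snd)

/-- Bernoulli law with parameter `p` on the reals. -/
def bern (p : ℝ) : Measure ℝ :=
  ENNReal.ofReal p • Measure.dirac 1 + ENNReal.ofReal (1 - p) • Measure.dirac 0

theorem bern_prob {p : ℝ} (h0 : 0 ≤ p) (h1 : p ≤ 1) : IsProbabilityMeasure (bern p) := by
  constructor
  simp only [bern, Measure.add_apply, Measure.smul_apply, measure_univ, smul_eq_mul, mul_one]
  rw [← ENNReal.ofReal_add h0 (by linarith)]
  simp

theorem map_ind {α : Type*} [MeasurableSpace α] (P : Measure α) [IsProbabilityMeasure P]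
    {A : Set α} (hA : MeasurableSet A) (f : α → ℝ) (hf1 : ∀ a ∈ A, f a = 1) (hf0 : ∀ a ∉ A, f a = 0) :
    Measurable f ∧ Measure.map f P = bern (P A).toReal := by
  classical
  have hf : f = A.indicator (fun _ => 1) := by
    ext a
    by_cases ha : a ∈ A
    · simp [ha, hf1 a ha]
    · simp [ha, hf0 a ha]
  have hm : Measurable f := by rw [hf]; exact measurable_const.indicator hA
  refine ⟨hm, ?_⟩
  have hAc : ENNReal.ofReal (1 - (P A).toReal) = P Aᶜ := by
    rw [prob_compl_eq_one_sub hA, ENNReal.ofReal_sub _ ENNReal.toReal_nonneg,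
      ENNReal.ofReal_toReal (measure_ne_top _ _)]
    simp
  ext s hs
  rw [Measure.map_apply hm hs]
  simp only [bern, Measure.add_apply, Measure.smul_apply, smul_eq_mul, hAc]
  rw [ENNReal.ofReal_toReal (measure_ne_top _ _), Measure.dirac_apply' _ hs, Measure.dirac_apply' _ hs]
  by_cases c1 : (1 : ℝ) ∈ s <;> by_cases c0 : (0 : ℝ) ∈ s
  · have : f ⁻¹' s = Set.univ := by
      ext a; by_cases ha : a ∈ A <;> simp [hf, ha, c1, c0]
    rw [this]; simp [c1, c0, measure_add_measure_compl hA]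
  · have : f ⁻¹' s = A := by
      ext a; by_cases ha : a ∈ A <;> simp [hf, ha, c1, c0]
    rw [this]; simp [c1, c0]
  · have : f ⁻¹' s = Aᶜ := by
      ext a; by_cases ha : a ∈ A <;> simp [hf, ha, c1, c0]
    rw [this]; simp [c1, c0]
  · have : f ⁻¹' s = ∅ := by
      ext a; by_cases ha : a ∈ A <;> simp [hf, ha, c1, c0]
    rw [this]; simp [c1, c0]

theorem pi_ind {α : Type*} [MeasurableSpace α] (P : Measure α) [IsProbabilityMeasure P]
    {A : Set α} (hA : MeasurableSet A) (f : α → ℝ) (hf1 : ∀ a ∈ A, f a = 1) (hf0 : ∀ a ∉ A, f a = 0)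
    (m : ℕ) {T : Set ℝ} (hT : MeasurableSet T) :
    (Measure.pi fun _ : Fin m => P) {ω | ∑ i, f (ω i) ∈ T}
      = (Measure.pi fun _ : Fin m => bern (P A).toReal) {u | ∑ i, u i ∈ T} := by
  obtain ⟨hm, hmap⟩ := map_ind P hA f hf1 hf0
  have : IsProbabilityMeasure (Measure.map f P) := Measure.isProbabilityMeasure_map hm.aemeasurable
  have h := Measure.pi_map_pi (μ := fun _ : Fin m => P) (f := fun _ => f) (fun _ => hm.aemeasurable)
  rw [← hmap, ← h, Measure.map_apply (by fun_prop)]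
  · rfl
  · exact (Finset.measurable_sum Finset.univ fun i _ => measurable_pi_apply i) hT

theorem binom_mono {p q : ℝ} (h0 : 0 ≤ p) (hpq : p ≤ q) (h1 : q ≤ 1) (m : ℕ) (k : ℝ) :
    (Measure.pi fun _ : Fin m => bern q) {u | ∑ i, u i < k}
      ≤ (Measure.pi fun _ : Fin m => bern p) {u | ∑ i, u i < k} ∧
    (Measure.pi fun _ : Fin m => bern p) {u | k < ∑ i, u i}
      ≤ (Measure.pi fun _ : Fin m => bern q) {u | k < ∑ i, u i} := by
  set P : Measure ℝ := volume.restrict (Set.Icc 0 1) with hP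
  have : IsProbabilityMeasure P := ⟨by simp [hP]⟩
  have hA : ∀ c : ℝ, 0 ≤ c → c ≤ 1 → (P (Set.Iic c)).toReal = c := by
    intro c c0 c1
    have : Set.Iic c ∩ Set.Icc 0 1 = Set.Icc 0 c := by
      ext x; simp only [Set.mem_inter_iff, Set.mem_Iic, Set.mem_Icc]
      constructor
      · rintro ⟨a, b, -⟩; exact ⟨b, a⟩
      · rintro ⟨a, b⟩; exact ⟨b, a, b.trans c1⟩
    rw [hP, Measure.restrict_apply measurableSet_Iic, this]
    simp [c0]
  have key : ∀ c : ℝ, 0 ≤ c → c ≤ 1 → ∀ T : Set ℝ, MeasurableSet T →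
      (Measure.pi fun _ : Fin m => P) {ω | ∑ i, (if ω i ≤ c then (1 : ℝ) else 0) ∈ T}
      = (Measure.pi fun _ : Fin m => bern c) {u | ∑ i, u i ∈ T} := by
    intro c c0 c1 T hT
    have := pi_ind P (measurableSet_Iic (a := c)) (fun u => if u ≤ c then (1 : ℝ) else 0)
      (fun a ha => if_pos ha) (fun a ha => if_neg ha) m hT
    rw [hA c c0 c1] at this
    exact this
  have le : ∀ ω : Fin m → ℝ, ∑ i, (if ω i ≤ p then (1 : ℝ) else 0) ≤ ∑ i, (if ω i ≤ q then (1 : ℝ) else 0) := by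
    intro ω
    refine Finset.sum_le_sum fun i _ => ?_
    split_ifs <;> linarith
  constructor
  · have e1 := key q (h0.trans hpq) h1 (Set.Iio k) measurableSet_Iio
    have e2 := key p h0 (hpq.trans h1) (Set.Iio k) measurableSet_Iio
    simp only [Set.mem_Iio] at e1 e2
    rw [← e1, ← e2]
    exact measure_mono fun ω hω => lt_of_le_of_lt (le ω) hω
  · have e1 := key q (h0.trans hpq) h1 (Set.Ioi k) measurableSet_Ioi
    have e2 := key p h0 (hpq.trans h1) (Set.Ioi k) measurableSet_Ioi
    simp only [Set.mem_Ioi] at e1 e2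
    rw [← e1, ← e2]
    exact measure_mono fun ω hω => lt_of_lt_of_le hω (le ω)

/-- One-step characteristic function of the centred, scaled Bernoulli variable. -/
def bchar (p s t : ℝ) : ℂ :=
  p * Complex.exp ((t * ((1 - p) / s) : ℝ) * Complex.I) +
    (1 - p) * Complex.exp ((t * ((0 - p) / s) : ℝ) * Complex.I)

theorem exp_approx (x : ℝ) (hx : |x| ≤ 1) :
    ‖Complex.exp (x * Complex.I) - (1 + x * Complex.I - x ^ 2 / 2)‖ ≤ |x| ^ 3 := by
  have h := Complex.exp_bound (x := x * Complex.I) (by simpa using hx) (n := 3) (by norm_num)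
  have e : ∑ k ∈ Finset.range 3, ((x : ℂ) * Complex.I) ^ k / (k.factorial : ℂ)
      = 1 + x * Complex.I - x ^ 2 / 2 := by
    simp [Finset.sum_range_succ, mul_pow, Nat.factorial]
    ring
  rw [e] at h
  refine h.trans ?_
  have : ‖(x : ℂ) * Complex.I‖ = |x| := by simp
  rw [this]
  have h3 : 0 ≤ |x| ^ 3 := by positivity
  norm_num [Nat.factorial]
  nlinarith

theorem bchar_approx {p s t : ℝ} (h0 : 0 ≤ p) (h1 : p ≤ 1) (hs : 0 < s) (ht : |t| ≤ s) :
    ‖bchar p s t - (1 - (p * (1 - p) * t ^ 2 / s ^ 2 / 2 : ℝ))‖ ≤ p * (1 - p) * |t| ^ 3 / s ^ 3 := by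
  set a : ℝ := t * ((1 - p) / s) with ha
  set b : ℝ := t * ((0 - p) / s) with hb
  have hq : 0 ≤ 1 - p := by linarith
  have ea : |a| = |t| / s * (1 - p) := by
    rw [ha, abs_mul, abs_div, abs_of_nonneg hq, abs_of_pos hs]; ring
  have eb : |b| = |t| / s * p := by
    rw [hb, abs_mul, abs_div, zero_sub, abs_neg, abs_of_nonneg h0, abs_of_pos hs]; ring
  have hts : |t| / s ≤ 1 := by rw [div_le_one hs]; exact ht
  have hts0 : 0 ≤ |t| / s := by positivity
  have A := exp_approx a (by rw [ea]; nlinarith)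
  have B := exp_approx b (by rw [eb]; nlinarith)
  have e : bchar p s t - (1 - (p * (1 - p) * t ^ 2 / s ^ 2 / 2 : ℝ))
      = (p : ℂ) * (Complex.exp (a * Complex.I) - (1 + a * Complex.I - a ^ 2 / 2)) +
        ((1 - p : ℝ) : ℂ) * (Complex.exp (b * Complex.I) - (1 + b * Complex.I - b ^ 2 / 2)) := by
    have z1 : p * a + (1 - p) * b = 0 := by rw [ha, hb]; ring
    have z2 : p * a ^ 2 + (1 - p) * b ^ 2 = p * (1 - p) * t ^ 2 / s ^ 2 := by
      rw [ha, hb]; field_simp; ring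
    have z1' : (p : ℂ) * a + (1 - p) * b = 0 := by exact_mod_cast z1
    have z2' : (p : ℂ) * a ^ 2 + (1 - p) * b ^ 2 = ((p * (1 - p) * t ^ 2 / s ^ 2 : ℝ) : ℂ) := by
      rw [← z2]; push_cast; ring
    rw [bchar, Complex.ofReal_div, ← z2', ← ha, ← hb]
    push_cast
    linear_combination (Complex.I) * z1'
  rw [e]
  refine (norm_add_le _ _).trans ?_
  rw [norm_mul, norm_mul, Complex.norm_real, Complex.norm_real, Real.norm_of_nonneg h0,
    Real.norm_of_nonneg hq]
  have h3 : p * |a| ^ 3 + (1 - p) * |b| ^ 3 ≤ p * (1 - p) * |t| ^ 3 / s ^ 3 := by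
    rw [ea, eb]
    have : p * (1 - p) * |t| ^ 3 / s ^ 3 - (p * (|t| / s * (1 - p)) ^ 3 + (1 - p) * (|t| / s * p) ^ 3)
      = (|t| / s) ^ 3 * (p * (1 - p)) * (1 - (1 - p) ^ 2 - p ^ 2) := by
      field_simp
      ring
    have h4 : 0 ≤ 1 - (1 - p) ^ 2 - p ^ 2 := by nlinarith
    have h5 : 0 ≤ p * (1 - p) := mul_nonneg h0 hq
    have : 0 ≤ (|t| / s) ^ 3 * (p * (1 - p)) * (1 - (1 - p) ^ 2 - p ^ 2) := by positivity
    linarith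
  refine le_trans (add_le_add (mul_le_mul_of_nonneg_left A h0) (mul_le_mul_of_nonneg_left B hq)) h3

theorem integral_bern {p : ℝ} (h0 : 0 ≤ p) (h1 : p ≤ 1) (f : ℝ → ℂ) :
    ∫ u, f u ∂(bern p) = p * f 1 + (1 - p) * f 0 := by
  have i : ∀ a : ℝ, Integrable f (Measure.dirac a) := fun a => integrable_dirac (by simp)
  rw [bern, integral_add_measure ((i _).smul_measure (by simp)) ((i _).smul_measure (by simp)),
    integral_smul_measure, integral_smul_measure, integral_dirac, integral_dirac,
    ENNReal.toReal_ofReal h0, ENNReal.toReal_ofReal (by linarith)]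
  simp

/-- Law of the standardized binomial variable. -/
def zlaw (m : ℕ) (p s : ℝ) : Measure ℝ :=
  Measure.map (fun u : Fin m → ℝ => (∑ i, u i - m * p) / s) (Measure.pi fun _ : Fin m => bern p)

theorem zlaw_meas (m : ℕ) (p s : ℝ) : Measurable (fun u : Fin m → ℝ => (∑ i, u i - m * p) / s) := by
  fun_prop

theorem zlaw_prob {p : ℝ} (h0 : 0 ≤ p) (h1 : p ≤ 1) (m : ℕ) (s : ℝ) :
    IsProbabilityMeasure (zlaw m p s) := by
  have := bern_prob h0 h1
  exact Measure.isProbabilityMeasure_map (zlaw_meas m p s).aemeasurable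

theorem zlaw_charFun {p : ℝ} (h0 : 0 ≤ p) (h1 : p ≤ 1) (m : ℕ) (s t : ℝ) :
    charFun (zlaw m p s) t = bchar p s t ^ m := by
  have := bern_prob h0 h1
  rw [charFun_apply_real, zlaw, integral_map (zlaw_meas m p s).aemeasurable (by fun_prop)]
  have h : ∀ u : Fin m → ℝ, Complex.exp (t * (((∑ i, u i - m * p) / s : ℝ) : ℂ) * Complex.I)
      = ∏ i, Complex.exp ((t * ((u i - p) / s) : ℝ) * Complex.I) := by
    intro u
    rw [← Complex.exp_sum, ← Finset.sum_mul]
    congr 2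
    norm_cast
    rw [← Finset.mul_sum, ← Finset.sum_div, Finset.sum_sub_distrib]
    simp
  simp_rw [h]
  rw [integral_fintype_prod_eq_prod (𝕜 := ℂ)
    (fun _ (u : ℝ) => Complex.exp ((t * ((u - p) / s) : ℝ) * Complex.I))]
  simp_rw [integral_bern h0 h1]
  simp [bchar]

theorem bchar_tendsto {p : ℕ → ℝ} (h0 : ∀ m, 0 ≤ p m) (h1 : ∀ m, p m ≤ 1)
    (hs : Tendsto (fun m : ℕ => Real.sqrt (m * (p m * (1 - p m)))) atTop atTop) (t : ℝ) :
    Tendsto (fun m : ℕ => bchar (p m) (Real.sqrt (m * (p m * (1 - p m)))) t ^ m) atTop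
      (𝓝 (Complex.exp (-(t ^ 2 : ℝ) / 2))) := by
  set s : ℕ → ℝ := fun m => Real.sqrt (m * (p m * (1 - p m))) with hsdef
  have key : Tendsto (fun m : ℕ => (m : ℂ) * (bchar (p m) (s m) t - 1)) atTop
      (𝓝 (-(t ^ 2 : ℝ) / 2)) := by
    rw [tendsto_iff_norm_sub_tendsto_zero]
    have hz : Tendsto (fun m => |t| ^ 3 / s m) atTop (𝓝 0) := tendsto_const_nhds.div_atTop hs
    refine squeeze_zero' (Eventually.of_forall fun _ => norm_nonneg _) ?_ hz
    filter_upwards [hs.eventually_ge_atTop (max |t| 1)] with m hm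
    have hspos : 0 < s m := lt_of_lt_of_le (by positivity) hm
    have hts : |t| ≤ s m := (le_max_left _ _).trans hm
    have B := bchar_approx (h0 m) (h1 m) hspos hts
    have hnn : 0 ≤ (m : ℝ) * (p m * (1 - p m)) :=
      mul_nonneg (Nat.cast_nonneg _) (mul_nonneg (h0 m) (by linarith [h1 m]))
    have hs2 : s m ^ 2 = m * (p m * (1 - p m)) := Real.sq_sqrt hnn
    have e : (m : ℂ) * (bchar (p m) (s m) t - 1) - (-(t ^ 2 : ℝ) / 2)
      = (m : ℂ) * (bchar (p m) (s m) t - (1 - (p m * (1 - p m) * t ^ 2 / s m ^ 2 / 2 : ℝ))) := by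
      have : (m : ℝ) * (p m * (1 - p m) * t ^ 2 / s m ^ 2 / 2) = t ^ 2 / 2 := by
        have hne : s m ^ 2 ≠ 0 := by positivity
        have : (m : ℝ) * (p m * (1 - p m) * t ^ 2 / s m ^ 2 / 2) = (m * (p m * (1 - p m))) * t ^ 2 / s m ^ 2 / 2 := by ring
        rw [this, ← hs2]
        field_simp
      have h' : (m : ℂ) * ((p m * (1 - p m) * t ^ 2 / s m ^ 2 / 2 : ℝ) : ℂ) = ((t ^ 2 : ℝ) : ℂ) / 2 := by
        rw [← Complex.ofReal_natCast, ← Complex.ofReal_mul, this]; push_cast; ring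
      linear_combination (-1 : ℂ) * h'
    rw [e, norm_mul]
    have : ‖(m : ℂ)‖ = m := by simp
    rw [this]
    refine (mul_le_mul_of_nonneg_left B (Nat.cast_nonneg m)).trans ?_
    have : (m : ℝ) * (p m * (1 - p m) * |t| ^ 3 / s m ^ 3) = (m * (p m * (1 - p m))) * |t| ^ 3 / s m ^ 3 := by ring
    rw [this, ← hs2]
    apply le_of_eq
    field_simp
  have := Complex.tendsto_one_add_pow_exp_of_tendsto key
  simp only [add_sub_cancel] at this
  exact this

theorem clt_binom {p : ℕ → ℝ} (h0 : ∀ m, 0 ≤ p m) (h1 : ∀ m, p m ≤ 1)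
    (hs : Tendsto (fun m : ℕ => Real.sqrt (m * (p m * (1 - p m)))) atTop atTop)
    {T : Set ℝ} (hT : MeasurableSet T) (hfr : gaussianReal 0 1 (frontier T) = 0) :
    Tendsto (fun m : ℕ => (Measure.pi fun _ : Fin m => bern (p m))
      {u | (∑ i, u i - m * p m) / Real.sqrt (m * (p m * (1 - p m))) ∈ T}) atTop
      (𝓝 (gaussianReal 0 1 T)) := by
  set Z : ℕ → ProbabilityMeasure ℝ := fun m =>
    ⟨zlaw m (p m) (Real.sqrt (m * (p m * (1 - p m)))), zlaw_prob (h0 m) (h1 m) _ _⟩ with hZ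
  set G : ProbabilityMeasure ℝ := ⟨gaussianReal 0 1, inferInstance⟩ with hG
  have hconv : Tendsto Z atTop (𝓝 G) := by
    refine ProbabilityMeasure.tendsto_iff_tendsto_charFun.2 fun t => ?_
    have e : charFun (G : Measure ℝ) t = Complex.exp (-(t ^ 2 : ℝ) / 2) := by
      change charFun (gaussianReal 0 1) t = _
      rw [charFun_gaussianReal]
      congr 1
      simp
      ring
    rw [e]
    have := bchar_tendsto h0 h1 hs t
    refine this.congr fun m => ?_
    exact (zlaw_charFun (h0 m) (h1 m) _ _ _).symm
  have := ProbabilityMeasure.tendsto_measure_of_null_frontier_of_tendsto' hconv (E := T) hfr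
  refine this.congr fun m => ?_
  change zlaw m (p m) (Real.sqrt (m * (p m * (1 - p m)))) T = _
  rw [zlaw, Measure.map_apply (zlaw_meas _ _ _) hT]
  rfl

/-- standard normal density -/
def phi (x : ℝ) : ℝ := (Real.sqrt (2 * Real.pi))⁻¹ * Real.exp (-(x ^ 2) / 2)

theorem pdf_eq (x : ℝ) : gaussianPDFReal 0 1 x = phi x := by
  simp [gaussianPDFReal, phi]

theorem phi_cont : Continuous phi := by unfold phi; fun_prop

theorem phi_pos (x : ℝ) : 0 < phi x := by unfold phi; positivity

theorem phi_le_one (x : ℝ) : phi x ≤ 1 := by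
  unfold phi
  have h1 : (Real.sqrt (2 * Real.pi))⁻¹ ≤ 1 := by
    apply inv_le_one_of_one_le₀
    rw [Real.one_le_sqrt]
    linarith [Real.pi_gt_three]
  have h2 : Real.exp (-(x ^ 2) / 2) ≤ 1 := by
    rw [Real.exp_le_one_iff]; nlinarith [sq_nonneg x]
  exact mul_le_one₀ h1 (Real.exp_nonneg _) h2

theorem phi_integrable : Integrable phi := by
  have := integrable_gaussianPDFReal 0 1
  have e : gaussianPDFReal 0 1 = phi := funext pdf_eq
  rwa [e] at this

theorem setIntegral_gauss (f : ℝ → ℝ) (h : ℝ) :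
    ∫ w in Set.Ici h, f w ∂(gaussianReal 0 1) = ∫ w in Set.Ioi h, phi w * f w := by
  rw [← integral_indicator measurableSet_Ici,
    integral_gaussianReal_eq_integral_smul (by norm_num), ← integral_Ici_eq_integral_Ioi,
    ← integral_indicator measurableSet_Ici]
  congr 1
  ext w
  by_cases hw : w ∈ Set.Ici h
  · simp only [Set.indicator_of_mem hw, pdf_eq, smul_eq_mul]
  · simp only [Set.indicator_of_notMem hw, smul_zero]

theorem gaussTail_eq (t : ℝ) : gaussTail t = ∫ w in Set.Ioi t, phi w := by
  have := setIntegral_gauss (fun _ => 1) t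
  simp only [mul_one] at this
  rw [← this]
  simp [gaussTail, Measure.real, Set.Ici]

theorem gaussTail_hasDerivAt (t : ℝ) : HasDerivAt gaussTail (-phi t) t := by
  have e : gaussTail = fun s => gaussTail 0 - ∫ w in (0 : ℝ)..s, phi w := by
    ext s
    rw [gaussTail_eq, gaussTail_eq,
      ← intervalIntegral.integral_Ioi_sub_Ioi' phi_integrable.integrableOn phi_integrable.integrableOn]
    ring
  rw [e]
  have := (intervalIntegral.integral_hasDerivAt_right (phi_integrable.intervalIntegrable (a := 0) (b := t))
    (phi_cont.stronglyMeasurableAtFilter _ _) phi_cont.continuousAt)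
  exact this.const_sub _

theorem gaussTail_cont : Continuous gaussTail :=
  continuous_iff_continuousAt.2 fun t => (gaussTail_hasDerivAt t).continuousAt

theorem gaussTail_nonneg (t : ℝ) : 0 ≤ gaussTail t := ENNReal.toReal_nonneg

theorem gaussTail_le_one (t : ℝ) : gaussTail t ≤ 1 := by
  unfold gaussTail
  exact measureReal_le_one

theorem sq_tendsto : Tendsto (fun x : ℝ => -(x ^ 2) / 2) atTop atBot := by
  have : Tendsto (fun x : ℝ => x ^ 2) atTop atTop := tendsto_pow_atTop (by norm_num)
  have := (tendsto_neg_atTop_atBot.comp this).atBot_div_const (show (0 : ℝ) < 2 by norm_num)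
  exact this

theorem mills {h : ℝ} (hh : 0 < h) : gaussTail h ≤ phi h / h := by
  have hd : ∀ x ∈ Set.Ici h, HasDerivAt (fun x => -phi x) (x * phi x) x := by
    intro x _
    have h1 : HasDerivAt (fun x : ℝ => -(x ^ 2) / 2) (-x) x := by
      have := ((hasDerivAt_pow 2 x).neg).div_const 2
      convert! this using 1
      simp
      ring
    have := ((h1.exp).const_mul ((Real.sqrt (2 * Real.pi))⁻¹)).neg
    convert! this using 1
    unfold phi
    ring
  have hlim : Tendsto (fun x => -phi x) atTop (𝓝 0) := by
    have := ((Real.tendsto_exp_atBot.comp sq_tendsto).const_mul ((Real.sqrt (2 * Real.pi))⁻¹)).neg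
    simpa [phi, Function.comp_def] using this
  have pos : ∀ x ∈ Set.Ioi h, 0 ≤ x * phi x := fun x hx =>
    mul_nonneg (hh.trans hx).le (phi_pos x).le
  have I := integral_Ioi_of_hasDerivAt_of_nonneg' hd pos hlim
  have J := integrableOn_Ioi_deriv_of_nonneg' hd pos hlim
  rw [gaussTail_eq, le_div_iff₀ hh, mul_comm, ← integral_const_mul]
  have : ∫ x in Set.Ioi h, x * phi x = phi h := by rw [I]; ring
  rw [← this]
  refine setIntegral_mono_on (phi_integrable.integrableOn.const_mul h) J measurableSet_Ioi ?_
  intro x hx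
  exact mul_le_mul_of_nonneg_right (le_of_lt hx) (phi_pos x).le

theorem mu_meas_set (h : ℝ) : MeasurableSet {p : ℝ × ℝ | h ≤ p.1 ∧ h ≤ p.2} :=
  (measurableSet_le measurable_const measurable_fst).inter
      (measurableSet_le measurable_const measurable_snd)

theorem mu_eq_prod (t h : ℝ) : mu t h = (((gaussianReal 0 1).prod (gaussianReal 0 1))
    {z : ℝ × ℝ | h ≤ z.1 ∧ h ≤ t * z.1 + Real.sqrt (1 - t ^ 2) * z.2}).toReal := by
  rw [mu, gaussPair, Measure.map_apply (by fun_prop) (mu_meas_set h)]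
  rfl

theorem mu_nonneg (t h : ℝ) : 0 ≤ mu t h := ENNReal.toReal_nonneg

theorem mu_le_tail (t h : ℝ) : mu t h ≤ gaussTail h := by
  rw [mu_eq_prod, gaussTail]
  have : ((gaussianReal 0 1).prod (gaussianReal 0 1)) ({z : ℝ | h ≤ z} ×ˢ Set.univ) = gaussianReal 0 1 {z : ℝ | h ≤ z} := by
    rw [Measure.prod_prod]; simp
  rw [← this]
  refine ENNReal.toReal_mono (measure_ne_top _ _) (measure_mono ?_)
  rintro z ⟨h1, -⟩
  exact ⟨h1, trivial⟩

theorem mu_le_one (t h : ℝ) : mu t h ≤ 1 := (mu_le_tail t h).trans (gaussTail_le_one h)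

theorem mu_one (h : ℝ) : mu 1 h = gaussTail h := by
  rw [mu_eq_prod, gaussTail]
  have : ((gaussianReal 0 1).prod (gaussianReal 0 1)) ({z : ℝ | h ≤ z} ×ˢ Set.univ) = gaussianReal 0 1 {z : ℝ | h ≤ z} := by
    rw [Measure.prod_prod]; simp
  rw [← this]
  congr 2
  ext z
  simp

theorem mu_neg_one {h : ℝ} (hh : 0 < h) : mu (-1) h = 0 := by
  rw [mu_eq_prod]
  have : {z : ℝ × ℝ | h ≤ z.1 ∧ h ≤ (-1) * z.1 + Real.sqrt (1 - (-1) ^ 2) * z.2} = ∅ := by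
    ext z
    simp
    intro h1
    linarith
  rw [this]; simp

theorem mu_eq_integral {t : ℝ} (ht : t ∈ Set.Ioo (-1 : ℝ) 1) (h : ℝ) :
    mu t h = ∫ w in Set.Ici h, gaussTail ((h - t * w) / Real.sqrt (1 - t ^ 2)) ∂(gaussianReal 0 1) := by
  have hc : 0 < Real.sqrt (1 - t ^ 2) := by
    apply Real.sqrt_pos.2; nlinarith [ht.1, ht.2]
  have hms : MeasurableSet {z : ℝ × ℝ | h ≤ z.1 ∧ h ≤ t * z.1 + Real.sqrt (1 - t ^ 2) * z.2} :=
    (measurableSet_le measurable_const measurable_fst).inter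
      (measurableSet_le measurable_const
        (show Measurable fun z : ℝ × ℝ => t * z.1 + Real.sqrt (1 - t ^ 2) * z.2 by fun_prop))
  rw [mu_eq_prod, Measure.prod_apply hms, integral_eq_lintegral_of_nonneg_ae
    (Eventually.of_forall fun _ => gaussTail_nonneg _)
    (gaussTail_cont.comp (by fun_prop)).aestronglyMeasurable, ← lintegral_indicator measurableSet_Ici]
  congr 2
  ext w
  by_cases hw : w ∈ Set.Ici h
  · rw [Set.indicator_of_mem hw, gaussTail, ENNReal.ofReal_toReal (measure_ne_top _ _)]
    congr 1
    ext z
    have hw' : h ≤ w := hw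
    simp only [Set.mem_preimage, Set.mem_ofPred_eq, hw', true_and]
    rw [div_le_iff₀ hc]
    constructor <;> intro _ <;> linarith
  · rw [Set.indicator_of_notMem hw]
    have hw' : ¬ h ≤ w := hw
    simp [hw']

theorem mu_zero (h : ℝ) : mu 0 h = gaussTail h ^ 2 := by
  rw [mu_eq_integral (by norm_num)]
  simp [sq, gaussTail, Measure.real, Set.Ici]

/-- the Plackett density -/
def ff (h t : ℝ) : ℝ := Real.exp (-(h ^ 2) / (1 + t)) / (2 * Real.pi * Real.sqrt (1 - t ^ 2))

theorem plackett_integral {t h : ℝ} (ht : t ∈ Set.Ioo (-1 : ℝ) 1) (hh : 0 < h) :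
    ∫ w in Set.Ici h, phi ((h - t * w) / Real.sqrt (1 - t ^ 2)) * ((w - t * h) / Real.sqrt (1 - t ^ 2) ^ 3)
      ∂(gaussianReal 0 1) = ff h t := by
  rw [setIntegral_gauss]
  set c := Real.sqrt (1 - t ^ 2) with hcdef
  have hct : 0 < 1 - t ^ 2 := by nlinarith [ht.1, ht.2]
  have hc : 0 < c := Real.sqrt_pos.2 hct
  have hc2 : c ^ 2 = 1 - t ^ 2 := Real.sq_sqrt hct.le
  set G : ℝ → ℝ := fun w => -((2 * Real.pi * c)⁻¹ * Real.exp (-(w ^ 2 + h ^ 2 - 2 * t * w * h) / (2 * c ^ 2))) with hG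
  have hpi : Real.sqrt (2 * Real.pi) ^ 2 = 2 * Real.pi := Real.sq_sqrt (by positivity)
  have hd : ∀ w ∈ Set.Ici h, HasDerivAt G (phi w * (phi ((h - t * w) / c) * ((w - t * h) / c ^ 3))) w := by
    intro w _
    have h1 : HasDerivAt (fun w : ℝ => -(w ^ 2 + h ^ 2 - 2 * t * w * h) / (2 * c ^ 2))
        (-(2 * w - 2 * t * h) / (2 * c ^ 2)) w := by
      have a := ((hasDerivAt_pow 2 w).add_const (h ^ 2)).sub
        (((hasDerivAt_id w).const_mul (2 * t)).mul_const h)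
      have b := a.neg.div_const (2 * c ^ 2)
      convert! b using 1
      simp
    have := ((h1.exp).const_mul ((2 * Real.pi * c)⁻¹)).neg
    convert! this using 1
    have e : phi w * phi ((h - t * w) / c) = (2 * Real.pi)⁻¹ * Real.exp (-(w ^ 2 + h ^ 2 - 2 * t * w * h) / (2 * c ^ 2)) := by
      have e2 : -(w ^ 2) / 2 + -(((h - t * w) / c) ^ 2) / 2 = -(w ^ 2 + h ^ 2 - 2 * t * w * h) / (2 * c ^ 2) := by
        field_simp
        rw [hc2]; ring
      rw [← e2, Real.exp_add, phi, phi]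
      have e3 : (2 * Real.pi)⁻¹ = (Real.sqrt (2 * Real.pi))⁻¹ * (Real.sqrt (2 * Real.pi))⁻¹ := by
        rw [← mul_inv, ← sq, hpi]
      rw [e3]
      ring
    rw [← mul_assoc, e]
    field_simp
  have pos : ∀ w ∈ Set.Ioi h, 0 ≤ phi w * (phi ((h - t * w) / c) * ((w - t * h) / c ^ 3)) := by
    intro w hw
    have hw' : h < w := hw
    have : 0 ≤ w - t * h := by nlinarith [ht.1, ht.2]
    have := phi_pos w
    have := phi_pos ((h - t * w) / c)
    positivity
  have hlim : Tendsto G atTop (𝓝 0) := by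
    have h1 : Tendsto (fun w : ℝ => (w - 2 * t * h)) atTop atTop := tendsto_atTop_add_const_right _ _ tendsto_id
    have h2 : Tendsto (fun w : ℝ => w * (w - 2 * t * h)) atTop atTop := tendsto_id.atTop_mul_atTop₀ h1
    have h3 : Tendsto (fun w : ℝ => w * (w - 2 * t * h) + h ^ 2) atTop atTop := tendsto_atTop_add_const_right _ _ h2
    have h4 := (tendsto_neg_atTop_atBot.comp h3).atBot_div_const (show (0 : ℝ) < 2 * c ^ 2 by positivity)
    have h5 := ((Real.tendsto_exp_atBot.comp h4).const_mul ((2 * Real.pi * c)⁻¹)).neg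
    simp only [mul_zero, neg_zero] at h5
    refine h5.congr fun w => ?_
    simp only [hG, Function.comp]
    congr 4
    ring
  rw [integral_Ioi_of_hasDerivAt_of_nonneg' hd pos hlim]
  simp only [hG, ff]
  have : -(h ^ 2 + h ^ 2 - 2 * t * h * h) / (2 * c ^ 2) = -(h ^ 2) / (1 + t) := by
    have h1 : 1 + t ≠ 0 := by linarith [ht.1]
    rw [hc2] at *
    rw [div_eq_div_iff (by positivity) h1]
    ring
  rw [this]
  rw [← hcdef, div_eq_inv_mul]
  ring

theorem u_hasDerivAt {t : ℝ} (ht : t ∈ Set.Ioo (-1 : ℝ) 1) (h w : ℝ) :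
    HasDerivAt (fun t => (h - t * w) / Real.sqrt (1 - t ^ 2))
      (-((w - t * h) / Real.sqrt (1 - t ^ 2) ^ 3)) t := by
  have hct : 0 < 1 - t ^ 2 := by nlinarith [ht.1, ht.2]
  have hc : 0 < Real.sqrt (1 - t ^ 2) := Real.sqrt_pos.2 hct
  have hc2 : Real.sqrt (1 - t ^ 2) ^ 2 = 1 - t ^ 2 := Real.sq_sqrt hct.le
  have a : HasDerivAt (fun t : ℝ => h - t * w) (-w) t := by
    have := ((hasDerivAt_id t).mul_const w).const_sub h
    simpa using this
  have b : HasDerivAt (fun t : ℝ => 1 - t ^ 2) (-(2 * t)) t := by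
    have := (hasDerivAt_pow 2 t).const_sub 1
    simpa using this
  have c := a.div (b.sqrt hct.ne') hc.ne'
  convert! c using 1
  field_simp
  rw [hc2]
  ring

theorem mu_hasDerivAt {t h : ℝ} (ht : t ∈ Set.Ioo (-1 : ℝ) 1) (hh : 0 < h) :
    HasDerivAt (fun t => mu t h) (ff h t) t := by
  obtain ⟨δ, δ0, hδ⟩ : ∃ δ : ℝ, 0 < δ ∧ ∀ x ∈ Metric.ball t δ, x ∈ Set.Ioo (-1 : ℝ) 1 ∧ δ ≤ 1 - x ^ 2 := by
    have ht' : |t| < 1 := abs_lt.2 ht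
    refine ⟨(1 - |t|) / 2, by linarith, fun x hx => ?_⟩
    rw [Metric.mem_ball, Real.dist_eq] at hx
    have h1 : |x| ≤ |x - t| + |t| := by
      have := abs_add_le (x - t) t
      simpa using this
    have h2 : |x| < 1 - (1 - |t|) / 2 := by linarith
    have h3 : |x| < 1 := by linarith [abs_nonneg t]
    refine ⟨abs_lt.1 h3, ?_⟩
    rw [← sq_abs]
    nlinarith [abs_nonneg x]
  have key := hasDerivAt_integral_of_dominated_loc_of_deriv_le
    (μ := (gaussianReal 0 1).restrict (Set.Ici h)) (x₀ := t) (s := Metric.ball t δ)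
    (F := fun t w => gaussTail ((h - t * w) / Real.sqrt (1 - t ^ 2)))
    (F' := fun t w => phi ((h - t * w) / Real.sqrt (1 - t ^ 2)) * ((w - t * h) / Real.sqrt (1 - t ^ 2) ^ 3))
    (bound := fun w => (|w| + h) / Real.sqrt δ ^ 3)
    (Metric.ball_mem_nhds t δ0)
    (Eventually.of_forall fun x => (gaussTail_cont.comp (by fun_prop)).aestronglyMeasurable)
    ?_ ?_ ?_ ?_ ?_
  · rw [← plackett_integral ht hh]
    refine key.2.congr_of_eventuallyEq ?_
    filter_upwards [Metric.ball_mem_nhds t δ0] with x hx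
    exact mu_eq_integral (hδ x hx).1 h
  · refine Integrable.of_bound (gaussTail_cont.comp (by fun_prop)).aestronglyMeasurable 1
      (Eventually.of_forall fun w => ?_)
    rw [Real.norm_of_nonneg (gaussTail_nonneg _)]
    exact gaussTail_le_one _
  · exact ((phi_cont.comp (by fun_prop)).mul (by fun_prop)).aestronglyMeasurable
  · refine Eventually.of_forall fun w x hx => ?_
    obtain ⟨h1, h2⟩ := hδ x hx
    have hs : Real.sqrt δ ≤ Real.sqrt (1 - x ^ 2) := Real.sqrt_le_sqrt h2
    have hs0 : 0 < Real.sqrt δ := Real.sqrt_pos.2 δ0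
    rw [norm_mul, Real.norm_of_nonneg (phi_pos _).le, norm_div, Real.norm_eq_abs, norm_pow,
      Real.norm_of_nonneg (Real.sqrt_nonneg _)]
    have h3 : |w - x * h| ≤ |w| + h := by
      refine (abs_sub _ _).trans ?_
      rw [abs_mul, abs_of_pos hh]
      have : |x| ≤ 1 := (abs_lt.2 h1).le
      nlinarith
    have h4 : |w - x * h| / Real.sqrt (1 - x ^ 2) ^ 3 ≤ (|w| + h) / Real.sqrt δ ^ 3 := by
      gcongr
    refine le_trans ?_ h4
    exact mul_le_of_le_one_left (by positivity) (phi_le_one _)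
  · have : Integrable (fun w : ℝ => w) (gaussianReal 0 1) := IsGaussian.integrable_fun_id
    exact ((this.abs.add (integrable_const h)).div_const _).restrict
  · refine Eventually.of_forall fun w x hx => ?_
    have := (gaussTail_hasDerivAt ((h - x * w) / Real.sqrt (1 - x ^ 2))).comp x (u_hasDerivAt (hδ x hx).1 h w)
    convert! this using 1
    ring

theorem ff_pos {h t : ℝ} (ht : t ∈ Set.Ioo (-1 : ℝ) 1) : 0 < ff h t := by
  have hct : 0 < 1 - t ^ 2 := by nlinarith [ht.1, ht.2]
  have hc : 0 < Real.sqrt (1 - t ^ 2) := Real.sqrt_pos.2 hct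
  unfold ff
  positivity

theorem ff_mono {h a b : ℝ} (ha : 0 ≤ a) (hab : a ≤ b) (hb : b < 1) : ff h a ≤ ff h b := by
  have hct : 0 < 1 - b ^ 2 := by nlinarith
  have hc : 0 < Real.sqrt (1 - b ^ 2) := Real.sqrt_pos.2 hct
  unfold ff
  have h1 : -(h ^ 2) / (1 + a) ≤ -(h ^ 2) / (1 + b) := by
    rw [neg_div, neg_div, neg_le_neg_iff]
    gcongr
  gcongr

theorem mu_monoOn {h : ℝ} (hh : 0 < h) : MonotoneOn (fun t => mu t h) (Set.Ioo (-1 : ℝ) 1) := by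
  refine monotoneOn_of_deriv_nonneg (convex_Ioo _ _) ?_ ?_ ?_
  · exact fun t ht => (mu_hasDerivAt ht hh).continuousAt.continuousWithinAt
  · rw [interior_Ioo]
    exact fun t ht => (mu_hasDerivAt ht hh).differentiableAt.differentiableWithinAt
  · rw [interior_Ioo]
    intro t ht
    rw [(mu_hasDerivAt ht hh).deriv]
    exact (ff_pos ht).le

theorem mu_mono {h a b : ℝ} (hh : 0 < h) (ha : -1 ≤ a) (hab : a ≤ b) (hb : b ≤ 1) :
    mu a h ≤ mu b h := by
  rcases hb.eq_or_lt with rfl | hb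
  · rw [mu_one]; exact mu_le_tail _ _
  rcases ha.eq_or_lt with rfl | ha
  · rw [mu_neg_one hh]; exact mu_nonneg _ _
  exact mu_monoOn hh ⟨ha, hab.trans_lt hb⟩ ⟨ha.trans_le hab, hb⟩ hab

theorem mu_incr {h a b : ℝ} (hh : 0 < h) (ha : 0 ≤ a) (hab : a ≤ b) (hb : b < 1) :
    (b - a) * ff h a ≤ mu b h - mu a h := by
  have hsub : ∀ t ∈ Set.Icc a b, t ∈ Set.Ioo (-1 : ℝ) 1 := fun t ht =>
    ⟨by linarith [ht.1], by linarith [ht.2]⟩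
  have := Convex.mul_sub_le_image_sub_of_le_deriv (convex_Icc a b) (f := fun t => mu t h)
    (C := ff h a) ?_ ?_ ?_ a ⟨le_rfl, hab⟩ b ⟨hab, le_rfl⟩ hab
  · linarith
  · exact fun t ht => (mu_hasDerivAt (hsub t ht) hh).continuousAt.continuousWithinAt
  · intro t ht
    exact (mu_hasDerivAt (hsub t (interior_subset ht)) hh).differentiableAt.differentiableWithinAt
  · intro t ht
    have ht' := interior_subset ht
    rw [(mu_hasDerivAt (hsub t ht') hh).deriv]
    exact ff_mono ha ht'.1 (ht'.2.trans_lt hb)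

theorem U_hasDerivAt {t h : ℝ} (ht : t ∈ Set.Ioo (-1 : ℝ) 1) (hh : 0 < h) :
    HasDerivAt (fun t => (1 + t) ^ 2 / h ^ 2 * ff h t)
      (ff h t * (1 + (1 + t) ^ 2 / h ^ 2 * ((2 - t) / (1 - t ^ 2)))) t := by
  have hct : 0 < 1 - t ^ 2 := by nlinarith [ht.1, ht.2]
  have hc : 0 < Real.sqrt (1 - t ^ 2) := Real.sqrt_pos.2 hct
  have hc2 : Real.sqrt (1 - t ^ 2) ^ 2 = 1 - t ^ 2 := Real.sq_sqrt hct.le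
  have h1 : 0 < 1 + t := by linarith [ht.1]
  have h2 : 0 < 1 - t := by linarith [ht.2]
  have a : HasDerivAt (fun t : ℝ => 1 + t) 1 t := (hasDerivAt_id t).const_add 1
  have b : HasDerivAt (fun t : ℝ => 1 - t ^ 2) (-(2 * t)) t := by
    have := (hasDerivAt_pow 2 t).const_sub 1
    simpa using this
  have e := ((hasDerivAt_const t (-(h ^ 2))).div a h1.ne').exp
  have s := (b.sqrt hct.ne').const_mul (2 * Real.pi)
  have f := e.div s (by positivity)
  have g := ((a.pow 2).div_const (h ^ 2)).mul f
  convert! g using 1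
  simp only [ff, Pi.div_apply, Pi.pow_apply]
  have h3 : 1 - t ^ 2 ≠ 0 := hct.ne'
  have hs4 : Real.sqrt (1 - t ^ 2) ^ 3 = Real.sqrt (1 - t ^ 2) * (1 - t ^ 2) := by
    rw [pow_succ, hc2]; ring
  generalize Real.sqrt (1 - t ^ 2) = c at *
  field_simp
  rw [hc2]
  ring

theorem mu_upper {t h : ℝ} (hh : 0 < h) (ht0 : 0 ≤ t) (ht1 : t < 1) :
    mu t h ≤ (1 + t) ^ 2 / h ^ 2 * ff h t := by
  have hsub : ∀ x ∈ Set.Icc 0 t, x ∈ Set.Ioo (-1 : ℝ) 1 := fun x hx =>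
    ⟨by linarith [hx.1], by linarith [hx.2]⟩
  have hD : ∀ x ∈ Set.Icc 0 t, HasDerivAt (fun t => (1 + t) ^ 2 / h ^ 2 * ff h t - mu t h) _ x :=
    fun x hx => (U_hasDerivAt (hsub x hx) hh).sub (mu_hasDerivAt (hsub x hx) hh)
  have mono : MonotoneOn (fun t => (1 + t) ^ 2 / h ^ 2 * ff h t - mu t h) (Set.Icc 0 t) := by
    refine monotoneOn_of_deriv_nonneg (convex_Icc _ _) ?_ ?_ ?_
    · exact fun x hx => (hD x hx).continuousAt.continuousWithinAt
    · exact fun x hx => (hD x (interior_subset hx)).differentiableAt.differentiableWithinAt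
    · intro x hx
      have hx' := interior_subset hx
      rw [(hD x hx').deriv]
      have hx2 := hsub x hx'
      have hp := ff_pos (h := h) hx2
      have h1 : 0 < 1 - x ^ 2 := by nlinarith [hx2.1, hx2.2]
      have h2 : 0 < 2 - x := by linarith [hx2.2]
      have : 0 ≤ ff h x * ((1 + x) ^ 2 / h ^ 2 * ((2 - x) / (1 - x ^ 2))) := by positivity
      linarith
  have h0 : (0 : ℝ) ≤ (1 + 0) ^ 2 / h ^ 2 * ff h 0 - mu 0 h := by
    rw [mu_zero, sub_nonneg]
    have m1 := mills hh
    have m2 : gaussTail h ^ 2 ≤ (phi h / h) ^ 2 := pow_le_pow_left₀ (gaussTail_nonneg h) m1 2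
    refine m2.trans (le_of_eq ?_)
    have hpi : Real.sqrt (2 * Real.pi) ^ 2 = 2 * Real.pi := Real.sq_sqrt (by positivity)
    have he : Real.exp (-(h ^ 2) / 2) ^ 2 = Real.exp (-(h ^ 2)) := by
      rw [← Real.exp_nat_mul]; congr 1; push_cast; ring
    simp only [phi, ff, div_pow, mul_pow, inv_pow, hpi, he]
    simp
    ring
  have := mono ⟨le_rfl, ht0⟩ ⟨ht0, le_rfl⟩ ht0
  simp only at this
  linarith

theorem gaussTail_le_inv {h : ℝ} (hh : 0 < h) : gaussTail h ≤ 1 / h :=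
  (mills hh).trans (by have := phi_le_one h; gcongr)

theorem hthr_sq {r : ℝ} (hr : 0 < r) {m : ℕ} (hm : 1 ≤ m) : hthr r m ^ 2 = 2 * r * Real.log m := by
  have : 0 ≤ Real.log m := Real.log_nonneg (by exact_mod_cast hm)
  exact Real.sq_sqrt (by positivity)

theorem hthr_pos {r : ℝ} (hr : 0 < r) {m : ℕ} (hm : 2 ≤ m) : 0 < hthr r m := by
  have : 0 < Real.log m := Real.log_pos (by exact_mod_cast hm)
  exact Real.sqrt_pos.2 (by positivity)

theorem log_nat_tendsto : Tendsto (fun m : ℕ => Real.log m) atTop atTop :=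
  Real.tendsto_log_atTop.comp tendsto_natCast_atTop_atTop

theorem hthr_tendsto {r : ℝ} (hr : 0 < r) : Tendsto (fun m : ℕ => hthr r m) atTop atTop :=
  Real.tendsto_sqrt_atTop.comp (log_nat_tendsto.const_mul_atTop (by positivity : 0 < 2 * r))

theorem ff_hthr {r : ℝ} (hr : 0 < r) {m : ℕ} (hm : 1 ≤ m) (t : ℝ) :
    ff (hthr r m) t = (m : ℝ) ^ (-(2 * r) / (1 + t)) / (2 * Real.pi * Real.sqrt (1 - t ^ 2)) := by
  have hm0 : (0 : ℝ) < m := by exact_mod_cast hm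
  rw [ff, hthr_sq hr hm, Real.rpow_def_of_pos hm0]
  congr 2
  ring

theorem epsm_pos {r lam eta : ℝ} (hr : 0 < r) (h0 : 0 < lam) (h1 : lam < 1) (heta : 0 < eta)
    {m : ℕ} (hm : 2 ≤ m) : 0 < epsm r lam eta m := by
  have h := hthr_pos hr hm
  unfold hthr at h
  have hm0 : (0 : ℝ) < m := by exact_mod_cast (by omega : 0 < m)
  have : 0 < 1 - lam ^ 2 := by nlinarith
  unfold epsm
  positivity

theorem hsq_eps_tendsto {r lam : ℝ} (eta : ℝ) (hr : 0 < r) (h0 : 0 < lam) (hlam : 2 * r - 1 < lam) :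
    Tendsto (fun m : ℕ => hthr r m ^ 2 * epsm r lam eta m) atTop (𝓝 0) := by
  set κ := (lam - (2 * r - 1)) / (2 * (1 + lam)) with hκ
  have hκ0 : 0 < κ := by rw [hκ]; apply div_pos <;> linarith
  set K := Real.sqrt (2 * Real.pi) * (1 + lam) * (1 - lam ^ 2) ^ ((1 : ℝ) / 4) * eta with hK
  -- h * m^{-κ} → 0
  have lim : Tendsto (fun m : ℕ => hthr r m * (m : ℝ) ^ (-κ)) atTop (𝓝 0) := by
    have a := (isLittleO_log_rpow_atTop (show (0 : ℝ) < κ by exact hκ0)).tendsto_div_nhds_zero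
    have b : Tendsto (fun m : ℕ => Real.log m / (m : ℝ) ^ κ) atTop (𝓝 0) :=
      a.comp tendsto_natCast_atTop_atTop
    have c : Tendsto (fun m : ℕ => (m : ℝ) ^ (-κ)) atTop (𝓝 0) :=
      (tendsto_rpow_neg_atTop hκ0).comp tendsto_natCast_atTop_atTop
    have d := (b.const_mul (2 * r)).add c
    simp only [mul_zero, add_zero] at d
    refine squeeze_zero' ?_ ?_ d
    · exact Eventually.of_forall fun m => mul_nonneg (Real.sqrt_nonneg _) (Real.rpow_nonneg (Nat.cast_nonneg _) _)
    · filter_upwards [eventually_ge_atTop 1] with m hm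
      have hm0 : (0 : ℝ) ≤ m := Nat.cast_nonneg _
      have e : 2 * r * (Real.log m / (m : ℝ) ^ κ) + (m : ℝ) ^ (-κ) = (hthr r m ^ 2 + 1) * (m : ℝ) ^ (-κ) := by
        rw [hthr_sq hr hm, Real.rpow_neg hm0]
        ring
      rw [e]
      refine mul_le_mul_of_nonneg_right ?_ (Real.rpow_nonneg hm0 _)
      nlinarith [sq_nonneg (hthr r m - 1)]
  have := lim.const_mul K
  rw [mul_zero] at this
  refine this.congr' ?_
  filter_upwards [eventually_ge_atTop 2] with m hm
  have hp := hthr_pos hr hm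
  have e : epsm r lam eta m = K / hthr r m * (m : ℝ) ^ (-κ) := by
    rw [epsm, hthr, hK, hκ, neg_div]
  rw [e]
  field_simp

theorem eps_tendsto {r lam : ℝ} (eta : ℝ) (hr : 0 < r) (h0 : 0 < lam) (hlam : 2 * r - 1 < lam) :
    Tendsto (fun m : ℕ => epsm r lam eta m) atTop (𝓝 0) := by
  have a := hsq_eps_tendsto eta hr h0 hlam
  have b : Tendsto (fun m : ℕ => hthr r m ^ 2) atTop atTop := (tendsto_pow_atTop (by norm_num)).comp (hthr_tendsto hr)
  have := a.div_atTop b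
  refine this.congr' ?_
  filter_upwards [eventually_ge_atTop 2] with m hm
  have hp := hthr_pos hr hm
  field_simp

theorem eps_exact {r lam eta : ℝ} (hr : 0 < r) (h0 : 0 < lam) (h1 : lam < 1)
    {m : ℕ} (hm : 2 ≤ m) :
    Real.sqrt m * epsm r lam eta m * hthr r m * Real.sqrt (ff (hthr r m) lam) = (1 + lam) * eta := by
  have hp := hthr_pos hr hm
  have hm0 : (0 : ℝ) < m := by exact_mod_cast (by omega : 0 < m)
  have hl : 0 < 1 - lam ^ 2 := by nlinarith
  rw [ff_hthr hr (by omega), epsm]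
  change Real.sqrt m * (_ / hthr r m * _) * hthr r m * _ = _
  have e1 : Real.sqrt m = (m : ℝ) ^ ((1 : ℝ) / 2) := Real.sqrt_eq_rpow _
  have e2 : Real.sqrt ((m : ℝ) ^ (-(2 * r) / (1 + lam)) / (2 * Real.pi * Real.sqrt (1 - lam ^ 2)))
      = (m : ℝ) ^ (-r / (1 + lam)) / (Real.sqrt (2 * Real.pi) * (1 - lam ^ 2) ^ ((1 : ℝ) / 4)) := by
    rw [Real.sqrt_div (by positivity), Real.sqrt_mul (by positivity)]
    congr 1
    · rw [Real.sqrt_eq_rpow, ← Real.rpow_mul hm0.le]; congr 1; ring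
    · congr 1
      rw [Real.sqrt_eq_rpow, Real.sqrt_eq_rpow, ← Real.rpow_mul hl.le]; norm_num
  have e3 : (m : ℝ) ^ ((1 : ℝ) / 2) * (m : ℝ) ^ (-(lam - (2 * r - 1)) / (2 * (1 + lam))) * (m : ℝ) ^ (-r / (1 + lam)) = 1 := by
    rw [← Real.rpow_add hm0, ← Real.rpow_add hm0]
    have : (1 : ℝ) / 2 + -(lam - (2 * r - 1)) / (2 * (1 + lam)) + -r / (1 + lam) = 0 := by
      field_simp; ring
    rw [this, Real.rpow_zero]
  rw [e1, e2]
  have hq : 0 < (1 - lam ^ 2) ^ ((1 : ℝ) / 4) := by positivity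
  generalize (m : ℝ) ^ ((1 : ℝ) / 2) = A at *
  generalize (m : ℝ) ^ (-(lam - (2 * r - 1)) / (2 * (1 + lam))) = B at *
  generalize (m : ℝ) ^ (-r / (1 + lam)) = C at *
  have hs : 0 < Real.sqrt (2 * Real.pi) := by positivity
  generalize (1 - lam ^ 2) ^ ((1 : ℝ) / 4) = D at *
  generalize Real.sqrt (2 * Real.pi) = E at *
  have : A * (E * (1 + lam) * D * eta / hthr r m * B) * hthr r m * (C / (E * D)) = (A * B * C) * ((1 + lam) * eta) := by
    field_simp
  rw [this, e3, one_mul]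

theorem ff_ratio {r lam : ℝ} (h0 : 0 < lam) (h1 : lam < 1) {τ : ℕ → ℝ}
    (hτ : Tendsto τ atTop (𝓝 0)) (hhτ : Tendsto (fun m => hthr r m ^ 2 * τ m) atTop (𝓝 0)) :
    Tendsto (fun m => ff (hthr r m) (lam + τ m) / ff (hthr r m) lam) atTop (𝓝 1) := by
  have hl : 0 < 1 - lam ^ 2 := by nlinarith
  have hs : 0 < Real.sqrt (1 - lam ^ 2) := Real.sqrt_pos.2 hl
  have a : Tendsto (fun m => lam + τ m) atTop (𝓝 lam) := by simpa using hτ.const_add lam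
  have b : Tendsto (fun m => Real.sqrt (1 - (lam + τ m) ^ 2)) atTop (𝓝 (Real.sqrt (1 - lam ^ 2))) :=
    ((a.pow 2).const_sub 1).sqrt
  have c : Tendsto (fun m => Real.sqrt (1 - lam ^ 2) / Real.sqrt (1 - (lam + τ m) ^ 2)) atTop (𝓝 1) := by
    have := (tendsto_const_nhds (x := Real.sqrt (1 - lam ^ 2))).div b hs.ne'
    rwa [div_self hs.ne'] at this
  have d : Tendsto (fun m => hthr r m ^ 2 * τ m / ((1 + lam) * (1 + (lam + τ m)))) atTop (𝓝 0) := by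
    have := hhτ.div ((a.const_add 1).const_mul (1 + lam)) (by positivity)
    rw [zero_div] at this
    exact this
  have e := (d.rexp).mul c
  rw [Real.exp_zero, one_mul] at e
  refine e.congr' ?_
  filter_upwards [a.eventually (lt_mem_nhds h0), a.eventually (gt_mem_nhds h1)] with m hm1 hm2
  have hl' : 0 < 1 - (lam + τ m) ^ 2 := by nlinarith
  have hs' : 0 < Real.sqrt (1 - (lam + τ m) ^ 2) := Real.sqrt_pos.2 hl'
  unfold ff
  have : hthr r m ^ 2 * τ m / ((1 + lam) * (1 + (lam + τ m)))
      = -(hthr r m ^ 2) / (1 + (lam + τ m)) - -(hthr r m ^ 2) / (1 + lam) := by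
    field_simp
    ring
  rw [this, Real.exp_sub]
  field_simp

theorem var_tendsto {r lam : ℝ} (hr : r ∈ Set.Ioo (0 : ℝ) 1) (hlam : 2 * r - 1 < lam) (h0 : 0 < lam)
    (h1 : lam < 1) {t : ℕ → ℝ} (ht : Tendsto t atTop (𝓝 lam)) :
    Tendsto (fun m : ℕ => Real.sqrt (m * (mu (t m) (hthr r m) * (1 - mu (t m) (hthr r m))))) atTop atTop := by
  refine Real.tendsto_sqrt_atTop.comp ?_
  obtain ⟨a, ha, hal⟩ := exists_between (max_lt h0 hlam)
  obtain ⟨b, hab, hbl⟩ := exists_between hal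
  have ha0 : 0 < a := (le_max_left _ _).trans_lt ha
  have ha1 : 2 * r - 1 < a := (le_max_right _ _).trans_lt ha
  have hs : 0 < Real.sqrt (1 - a ^ 2) := Real.sqrt_pos.2 (by nlinarith)
  have big : Tendsto (fun m : ℕ => (b - a) / (2 * Real.pi * Real.sqrt (1 - a ^ 2)) / 2 * (m : ℝ) ^ (1 + -(2 * r) / (1 + a))) atTop atTop := by
    refine Tendsto.const_mul_atTop ?_ ((tendsto_rpow_atTop ?_).comp tendsto_natCast_atTop_atTop)
    · have := sub_pos.2 hab
      positivity
    · have : 1 + -(2 * r) / (1 + a) = (1 + a - 2 * r) / (1 + a) := by field_simp; ring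
      rw [this]; apply div_pos <;> linarith
  refine tendsto_atTop_mono' _ ?_ big
  filter_upwards [eventually_ge_atTop 2, ht.eventually (lt_mem_nhds hbl), ht.eventually (gt_mem_nhds h1),
    (hthr_tendsto hr.1).eventually_ge_atTop 2] with m hm hbt ht1 hh2
  have hp := hthr_pos hr.1 hm
  have hm0 : (0 : ℝ) < m := by exact_mod_cast (by omega : 0 < m)
  have q1 : mu (t m) (hthr r m) ≤ 1 / 2 := by
    refine (mu_le_tail _ _).trans ((gaussTail_le_inv hp).trans ?_)
    exact one_div_le_one_div_of_le (by norm_num) hh2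
  have q2 : (b - a) * ff (hthr r m) a ≤ mu (t m) (hthr r m) := by
    have i1 := mu_incr hp ha0.le hab.le (hbl.trans h1)
    have i2 := mu_mono hp (by linarith) hbt.le ht1.le
    linarith [mu_nonneg a (hthr r m)]
  have q0 := mu_nonneg (t m) (hthr r m)
  have q3 : (b - a) * ff (hthr r m) a * (1 / 2) ≤ mu (t m) (hthr r m) * (1 - mu (t m) (hthr r m)) := by
    apply mul_le_mul q2 (by linarith) (by norm_num) q0
  refine le_trans (le_of_eq ?_) (mul_le_mul_of_nonneg_left q3 hm0.le)
  rw [ff_hthr hr.1 (by omega), Real.rpow_add hm0, Real.rpow_one]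
  ring

theorem score_eq_sum {d m : ℕ} (hm : 1 ≤ m) (r : ℝ) (x y : Fin d → ℝ) (ω : Fin m → Fin d → ℝ) :
    (m : ℝ) * score d m r x y ω = ∑ i, (if hthr r m ≤ dotp (ω i) x ∧ hthr r m ≤ dotp (ω i) y then (1 : ℝ) else 0) := by
  have hm0 : (m : ℝ) ≠ 0 := by exact_mod_cast (by omega : m ≠ 0)
  rw [score, ← mul_assoc, mul_one_div_cancel hm0, one_mul]
  refine Finset.sum_congr rfl fun i _ => ?_
  by_cases h1 : hthr r m ≤ dotp (ω i) x <;> by_cases h2 : hthr r m ≤ dotp (ω i) y <;> simp [h1, h2]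

theorem score_law {d m : ℕ} (r : ℝ) {x y : Fin d → ℝ} (hx : unitVec x) (hy : unitVec y)
    {T : Set ℝ} (hT : MeasurableSet T) :
    (Prob d m) {ω | ∑ i, (if hthr r m ≤ dotp (ω i) x ∧ hthr r m ≤ dotp (ω i) y then (1 : ℝ) else 0) ∈ T}
      = (Measure.pi fun _ : Fin m => bern (mu (dotp x y) (hthr r m))) {u | ∑ i, u i ∈ T} := by
  rw [← prob_pair hx hy]
  refine pi_ind (Measure.pi fun _ : Fin d => gaussianReal 0 1)
    (A := {a | hthr r m ≤ dotp a x ∧ hthr r m ≤ dotp a y}) ?_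
    (fun a => if hthr r m ≤ dotp a x ∧ hthr r m ≤ dotp a y then (1 : ℝ) else 0)
    (fun a ha => if_pos ha) (fun a ha => if_neg ha) m hT
  exact (measurableSet_le measurable_const (measurable_dotp x)).inter
      (measurableSet_le measurable_const (measurable_dotp y))

theorem gauss_Iic (t : ℝ) : gaussianReal 0 1 (Set.Iic (-t)) = gaussianReal 0 1 (Set.Ici t) := by
  have h : (gaussianReal 0 1).map (fun x : ℝ => -x) = gaussianReal 0 1 := by
    rw [gaussianReal_map_neg]; simp
  conv_lhs => rw [← h]
  rw [Measure.map_apply measurable_neg measurableSet_Iic]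
  congr 1
  ext x
  simp

theorem ofReal_gaussTail (t : ℝ) : ENNReal.ofReal (gaussTail t) = gaussianReal 0 1 (Set.Ici t) := by
  rw [gaussTail, ENNReal.ofReal_toReal (measure_ne_top _ _)]
  rfl

theorem F1_bound {r lam eta : ℝ} (hr : r ∈ Set.Ioo (0 : ℝ) 1) (hlam : 2 * r - 1 < lam) (h0 : 0 < lam)
    (h1 : lam < 1) (heta : 0 < eta) {G : ℝ} (hG : gaussTail eta < G) :
    ∀ᶠ m : ℕ in atTop, (Measure.pi fun _ : Fin m => bern (mu (lam + epsm r lam eta m) (hthr r m)))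
      {u | ∑ i, u i < m * mu lam (hthr r m)} ≤ ENNReal.ofReal G := by
  obtain ⟨η, hη1, hη2⟩ : ∃ η < eta, gaussTail η < G := by
    have := (gaussTail_cont.tendsto eta).eventually (gt_mem_nhds hG)
    obtain ⟨l, hl, hl2⟩ := exists_Ioc_subset_of_mem_nhds this ⟨eta - 1, by linarith⟩
    obtain ⟨η, a, b⟩ := exists_between hl
    exact ⟨η, b, hl2 ⟨a, b.le⟩⟩
  have heps := eps_tendsto eta hr.1 h0 hlam
  have hheps := hsq_eps_tendsto eta hr.1 h0 hlam
  have ht : Tendsto (fun m => lam + epsm r lam eta m) atTop (𝓝 lam) := by simpa using heps.const_add lam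
  have hvar := var_tendsto hr hlam h0 h1 ht
  have clt := clt_binom (p := fun m => mu (lam + epsm r lam eta m) (hthr r m))
    (fun m => mu_nonneg _ _) (fun m => mu_le_one _ _) hvar (T := Set.Iic (-η)) measurableSet_Iic
    (by have := nullSingletonClass_gaussianReal (μ := 0) (v := 1) one_ne_zero
        rw [frontier_Iic]; exact measure_singleton _)
  rw [gauss_Iic, ← ofReal_gaussTail] at clt
  have hlt : ENNReal.ofReal (gaussTail η) < ENNReal.ofReal G :=
    (ENNReal.ofReal_lt_ofReal_iff ((gaussTail_nonneg η).trans_lt hη2)).2 hη2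
  -- the drift
  have ratio := ff_ratio (r := r) h0 h1 heps hheps
  have drift : Tendsto (fun m => (1 + lam) * eta / (1 + (lam + epsm r lam eta m)) /
      Real.sqrt (ff (hthr r m) (lam + epsm r lam eta m) / ff (hthr r m) lam)) atTop (𝓝 eta) := by
    have := ((tendsto_const_nhds (x := (1 + lam) * eta)).div (ht.const_add 1) (by positivity)).div
      ratio.sqrt (by simp)
    have e : (1 + lam) * eta / (1 + lam) / Real.sqrt 1 = eta := by
      rw [Real.sqrt_one, div_one]; field_simp
    rwa [e] at this
  filter_upwards [clt.eventually (gt_mem_nhds hlt), drift.eventually (lt_mem_nhds hη1),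
    eventually_ge_atTop 2, ht.eventually (gt_mem_nhds h1), hvar.eventually_gt_atTop 0] with m c1 c2 hm ht1 hv
  refine le_trans (measure_mono ?_) c1.le
  intro u hu
  have hp := hthr_pos hr.1 hm
  have he := epsm_pos hr.1 h0 h1 heta hm
  have ex := eps_exact (eta := eta) hr.1 h0 h1 hm
  set h := hthr r m with hh
  set ε := epsm r lam eta m with hε
  have inc := mu_incr hp h0.le (by linarith : lam ≤ lam + ε) ht1
  have up := mu_upper hp (by linarith : 0 ≤ lam + ε) ht1
  set q := mu (lam + ε) h with hq
  set p := mu lam h with hpp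
  have hm0 : (0 : ℝ) < m := by exact_mod_cast (by omega : 0 < m)
  have f1 := ff_pos (h := h) (t := lam) ⟨by linarith, h1⟩
  have f2 := ff_pos (h := h) (t := lam + ε) ⟨by linarith, ht1⟩
  have q0 : 0 ≤ q := mu_nonneg _ _
  change (∑ i, u i - m * q) / Real.sqrt (m * (q * (1 - q))) ∈ Set.Iic (-η)
  rw [Set.mem_Iic, div_le_iff₀ hv]
  have hu' : ∑ i, u i < m * p := hu
  suffices η * Real.sqrt (m * (q * (1 - q))) ≤ m * (q - p) by nlinarith
  set B := (1 + lam) * eta / (1 + (lam + ε)) / Real.sqrt (ff h (lam + ε) / ff h lam) with hB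
  have hB0 : 0 < B := by have : 0 < 1 + (lam + ε) := by linarith
                         positivity
  have s1 : Real.sqrt (m * (q * (1 - q))) ≤ Real.sqrt m * ((1 + (lam + ε)) / h * Real.sqrt (ff h (lam + ε))) := by
    have : 0 ≤ (1 + (lam + ε)) / h := by have : 0 < 1 + (lam + ε) := by linarith
                                         positivity
    rw [← Real.sqrt_sq this, ← Real.sqrt_mul (sq_nonneg _), ← Real.sqrt_mul hm0.le, div_pow]
    apply Real.sqrt_le_sqrt
    refine mul_le_mul_of_nonneg_left (le_trans ?_ up) hm0.le
    nlinarith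
  calc η * Real.sqrt (m * (q * (1 - q))) ≤ B * Real.sqrt (m * (q * (1 - q))) :=
        mul_le_mul_of_nonneg_right c2.le (Real.sqrt_nonneg _)
    _ ≤ B * (Real.sqrt m * ((1 + (lam + ε)) / h * Real.sqrt (ff h (lam + ε)))) :=
        mul_le_mul_of_nonneg_left s1 hB0.le
    _ = m * (ε * ff h lam) := by
        have hsm : Real.sqrt m * Real.sqrt m = m := Real.mul_self_sqrt hm0.le
        have hsf : Real.sqrt (ff h lam) * Real.sqrt (ff h lam) = ff h lam := Real.mul_self_sqrt f1.le
        rw [hB, ← ex, Real.sqrt_div f2.le]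
        have g1 : 0 < Real.sqrt (ff h lam) := Real.sqrt_pos.2 f1
        have g2 : 0 < Real.sqrt (ff h (lam + ε)) := Real.sqrt_pos.2 f2
        have g3 : 0 < 1 + (lam + ε) := by linarith
        have : Real.sqrt m * ε * h * Real.sqrt (ff h lam) / (1 + (lam + ε)) / (Real.sqrt (ff h (lam + ε)) / Real.sqrt (ff h lam)) *
          (Real.sqrt m * ((1 + (lam + ε)) / h * Real.sqrt (ff h (lam + ε))))
          = (Real.sqrt m * Real.sqrt m) * (ε * (Real.sqrt (ff h lam) * Real.sqrt (ff h lam))) := by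
          field_simp
        rw [this, hsm, hsf]
    _ ≤ m * (q - p) := by
        refine mul_le_mul_of_nonneg_left ?_ hm0.le
        have : lam + ε - lam = ε := by ring
        rwa [this] at inc

theorem F2_bound {r lam eta : ℝ} (hr : r ∈ Set.Ioo (0 : ℝ) 1) (hlam : 2 * r - 1 < lam) (h0 : 0 < lam)
    (h1 : lam < 1) (heta : 0 < eta) {G : ℝ} (hG : gaussTail eta < G) :
    ∀ᶠ m : ℕ in atTop, (Measure.pi fun _ : Fin m => bern (mu (lam + -epsm r lam eta m) (hthr r m)))
      {u | m * mu lam (hthr r m) < ∑ i, u i} ≤ ENNReal.ofReal G := by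
  obtain ⟨η, hη1, hη2⟩ : ∃ η < eta, gaussTail η < G := by
    have := (gaussTail_cont.tendsto eta).eventually (gt_mem_nhds hG)
    obtain ⟨l, hl, hl2⟩ := exists_Ioc_subset_of_mem_nhds this ⟨eta - 1, by linarith⟩
    obtain ⟨η, a, b⟩ := exists_between hl
    exact ⟨η, b, hl2 ⟨a, b.le⟩⟩
  have heps : Tendsto (fun m => -epsm r lam eta m) atTop (𝓝 0) := by
    simpa using (eps_tendsto eta hr.1 h0 hlam).neg
  have hheps : Tendsto (fun m => hthr r m ^ 2 * -epsm r lam eta m) atTop (𝓝 0) := by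
    simpa using (hsq_eps_tendsto eta hr.1 h0 hlam).neg
  have ht : Tendsto (fun m => lam + -epsm r lam eta m) atTop (𝓝 lam) := by simpa using heps.const_add lam
  have hvar := var_tendsto hr hlam h0 h1 ht
  have clt := clt_binom (p := fun m => mu (lam + -epsm r lam eta m) (hthr r m))
    (fun m => mu_nonneg _ _) (fun m => mu_le_one _ _) hvar (T := Set.Ici η) measurableSet_Ici
    (by have := nullSingletonClass_gaussianReal (μ := 0) (v := 1) one_ne_zero
        rw [frontier_Ici]; exact measure_singleton _)
  rw [← ofReal_gaussTail] at clt
  have hlt : ENNReal.ofReal (gaussTail η) < ENNReal.ofReal G :=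
    (ENNReal.ofReal_lt_ofReal_iff ((gaussTail_nonneg η).trans_lt hη2)).2 hη2
  have ratio := ff_ratio (r := r) h0 h1 heps hheps
  have drift : Tendsto (fun m => (1 + lam) * eta / (1 + (lam + -epsm r lam eta m)) *
      Real.sqrt (ff (hthr r m) (lam + -epsm r lam eta m) / ff (hthr r m) lam)) atTop (𝓝 eta) := by
    have := ((tendsto_const_nhds (x := (1 + lam) * eta)).div (ht.const_add 1) (by positivity)).mul
      ratio.sqrt
    have e : (1 + lam) * eta / (1 + lam) * Real.sqrt 1 = eta := by
      rw [Real.sqrt_one, mul_one]; field_simp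
    rwa [e] at this
  filter_upwards [clt.eventually (gt_mem_nhds hlt), drift.eventually (lt_mem_nhds hη1),
    eventually_ge_atTop 2, ht.eventually (lt_mem_nhds h0), hvar.eventually_gt_atTop 0] with m c1 c2 hm ht0 hv
  refine le_trans (measure_mono ?_) c1.le
  intro u hu
  have hp := hthr_pos hr.1 hm
  have he := epsm_pos hr.1 h0 h1 heta hm
  have ex := eps_exact (eta := eta) hr.1 h0 h1 hm
  set h := hthr r m with hh
  set ε := epsm r lam eta m with hε
  have inc := mu_incr hp ht0.le (by linarith : lam + -ε ≤ lam) h1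
  have up := mu_upper hp ht0.le (by linarith : lam + -ε < 1)
  set q := mu (lam + -ε) h with hq
  set p := mu lam h with hpp
  have hm0 : (0 : ℝ) < m := by exact_mod_cast (by omega : 0 < m)
  have f1 := ff_pos (h := h) (t := lam) ⟨by linarith, h1⟩
  have f2 := ff_pos (h := h) (t := lam + -ε) ⟨by linarith, by linarith⟩
  have q0 : 0 ≤ q := mu_nonneg _ _
  change (∑ i, u i - m * q) / Real.sqrt (m * (q * (1 - q))) ∈ Set.Ici η
  rw [Set.mem_Ici, le_div_iff₀ hv]
  have hu' : m * p < ∑ i, u i := hu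
  suffices η * Real.sqrt (m * (q * (1 - q))) ≤ m * (p - q) by nlinarith
  set B := (1 + lam) * eta / (1 + (lam + -ε)) * Real.sqrt (ff h (lam + -ε) / ff h lam) with hB
  have hB0 : 0 < B := by have : 0 < 1 + (lam + -ε) := by linarith
                         positivity
  have s1 : Real.sqrt (m * (q * (1 - q))) ≤ Real.sqrt m * ((1 + (lam + -ε)) / h * Real.sqrt (ff h (lam + -ε))) := by
    have : 0 ≤ (1 + (lam + -ε)) / h := by have : 0 < 1 + (lam + -ε) := by linarith
                                          positivity
    rw [← Real.sqrt_sq this, ← Real.sqrt_mul (sq_nonneg _), ← Real.sqrt_mul hm0.le, div_pow]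
    apply Real.sqrt_le_sqrt
    refine mul_le_mul_of_nonneg_left (le_trans ?_ up) hm0.le
    nlinarith
  calc η * Real.sqrt (m * (q * (1 - q))) ≤ B * Real.sqrt (m * (q * (1 - q))) :=
        mul_le_mul_of_nonneg_right c2.le (Real.sqrt_nonneg _)
    _ ≤ B * (Real.sqrt m * ((1 + (lam + -ε)) / h * Real.sqrt (ff h (lam + -ε)))) :=
        mul_le_mul_of_nonneg_left s1 hB0.le
    _ = m * (ε * ff h (lam + -ε)) := by
        have hsm : Real.sqrt m * Real.sqrt m = m := Real.mul_self_sqrt hm0.le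
        have hsf : Real.sqrt (ff h (lam + -ε)) * Real.sqrt (ff h (lam + -ε)) = ff h (lam + -ε) := Real.mul_self_sqrt f2.le
        rw [hB, ← ex, Real.sqrt_div f2.le]
        have g1 : 0 < Real.sqrt (ff h lam) := Real.sqrt_pos.2 f1
        have g3 : 0 < 1 + (lam + -ε) := by linarith
        have : Real.sqrt m * ε * h * Real.sqrt (ff h lam) / (1 + (lam + -ε)) * (Real.sqrt (ff h (lam + -ε)) / Real.sqrt (ff h lam)) *
          (Real.sqrt m * ((1 + (lam + -ε)) / h * Real.sqrt (ff h (lam + -ε))))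
          = (Real.sqrt m * Real.sqrt m) * (ε * (Real.sqrt (ff h (lam + -ε)) * Real.sqrt (ff h (lam + -ε)))) := by
          generalize lam + -ε = z at *
          field_simp
        rw [this, hsm, hsf]
    _ ≤ m * (p - q) := by
        refine mul_le_mul_of_nonneg_left ?_ hm0.le
        have : lam - (lam + -ε) = ε := by ring
        rwa [this] at inc

/-- the good event `G` holds for all corpus documents simultaneously,
except with probability at most `n·P(N(0,1) ≥ η)` asymptotically. -/
theorem stmt4 {d : ℕ} (r : ℝ) (hr : r ∈ Set.Ioo (0 : ℝ) 1)
    (y : Fin d → ℝ) (hy : unitVec y)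
    (lam : ℝ) (hlam : lam ∈ Set.Ioo (2 * r - 1) 1) (hlam0 : 0 < lam)
    (eta : ℝ) (heta : 0 < eta) (n : ℕ) :
    Filter.limsup (fun m : ℕ =>
        ⨆ X : {X : Fin n → Fin d → ℝ // ∀ i, unitVec (X i)},
          ((Prob d m)
            {ω | ∀ i : Fin n,
                (lam + epsm r lam eta m ≤ dotp (X.1 i) y → muM r m lam ≤ score d m r (X.1 i) y ω) ∧
                (dotp (X.1 i) y ≤ lam - epsm r lam eta m → score d m r (X.1 i) y ω ≤ muM r m lam)}ᶜ).toReal)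
      atTop ≤ n * gaussTail eta := by
  have main : ∀ G : ℝ, gaussTail eta < G → Filter.limsup (fun m : ℕ =>
        ⨆ X : {X : Fin n → Fin d → ℝ // ∀ i, unitVec (X i)},
          ((Prob d m)
            {ω | ∀ i : Fin n,
                (lam + epsm r lam eta m ≤ dotp (X.1 i) y → muM r m lam ≤ score d m r (X.1 i) y ω) ∧
                (dotp (X.1 i) y ≤ lam - epsm r lam eta m → score d m r (X.1 i) y ω ≤ muM r m lam)}ᶜ).toReal)
      atTop ≤ n * G := by
    intro G hG
    have hG0 : 0 ≤ G := (gaussTail_nonneg eta).trans hG.le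
    refine Filter.limsup_le_of_le ?_ ?_
    · refine Filter.isCoboundedUnder_le_of_le atTop (x := 0) fun m => ?_
      exact Real.iSup_nonneg fun _ => ENNReal.toReal_nonneg
    have heps := eps_tendsto eta hr.1 hlam0 hlam.1
    have ht : Tendsto (fun m => lam + -epsm r lam eta m) atTop (𝓝 lam) := by
      simpa using heps.neg.const_add lam
    filter_upwards [F1_bound hr hlam.1 hlam0 hlam.2 heta hG, F2_bound hr hlam.1 hlam0 hlam.2 heta hG,
      eventually_ge_atTop 2, ht.eventually (lt_mem_nhds hlam0)] with m b1 b2 hm hpos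
    have he := epsm_pos hr.1 hlam0 hlam.2 heta hm
    have hp := hthr_pos hr.1 hm
    have hm0 : (0 : ℝ) < m := by exact_mod_cast (by omega : 0 < m)
    refine Real.iSup_le (fun X => ?_) (by positivity)
    refine ENNReal.toReal_le_of_le_ofReal (by positivity) ?_
    have sub : {ω : Fin m → Fin d → ℝ | ∀ i : Fin n,
                (lam + epsm r lam eta m ≤ dotp (X.1 i) y → muM r m lam ≤ score d m r (X.1 i) y ω) ∧
                (dotp (X.1 i) y ≤ lam - epsm r lam eta m → score d m r (X.1 i) y ω ≤ muM r m lam)}ᶜ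
        ⊆ ⋃ i : Fin n, {ω : Fin m → Fin d → ℝ |
                (lam + epsm r lam eta m ≤ dotp (X.1 i) y → muM r m lam ≤ score d m r (X.1 i) y ω) ∧
                (dotp (X.1 i) y ≤ lam - epsm r lam eta m → score d m r (X.1 i) y ω ≤ muM r m lam)}ᶜ := by
      intro ω hω
      rw [Set.mem_iUnion]
      by_contra hcon
      push Not at hcon
      exact hω fun i => not_not.1 (hcon i)
    refine (measure_mono sub).trans ((measure_iUnion_le _).trans ?_)
    rw [tsum_fintype]
    have each : ∀ i : Fin n, Prob d m {ω : Fin m → Fin d → ℝ |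
                (lam + epsm r lam eta m ≤ dotp (X.1 i) y → muM r m lam ≤ score d m r (X.1 i) y ω) ∧
                (dotp (X.1 i) y ≤ lam - epsm r lam eta m → score d m r (X.1 i) y ω ≤ muM r m lam)}ᶜ
        ≤ ENNReal.ofReal G := by
      intro i
      have hx := X.2 i
      generalize X.1 i = x at hx ⊢
      have hρ := abs_dotp_le hx hy
      have hρ1 : dotp x y ≤ 1 := by nlinarith
      have hρ2 : -1 ≤ dotp x y := by nlinarith
      by_cases c1 : lam + epsm r lam eta m ≤ dotp x y
      · have mono := mu_mono hp (by linarith) c1 hρ1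
        refine le_trans ?_ ((binom_mono (mu_nonneg _ _) mono (mu_le_one _ _) m (m * mu lam (hthr r m))).1.trans b1)
        have law := score_law (m := m) r hx hy (measurableSet_Iio (a := m * mu lam (hthr r m)))
        simp only [Set.mem_Iio] at law
        rw [← law]
        refine measure_mono fun ω hω => ?_
        rw [Set.mem_ofPred_eq, ← score_eq_sum (by omega)]
        have : ¬ muM r m lam ≤ score d m r x y ω := fun hc =>
          hω ⟨fun _ => hc, fun hc2 => absurd hc2 (by linarith)⟩
        exact mul_lt_mul_of_pos_left (not_le.1 this) hm0
      by_cases c2 : dotp x y ≤ lam - epsm r lam eta m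
      · have mono := mu_mono hp hρ2 c2 (by linarith [hlam.2])
        rw [sub_eq_add_neg] at mono
        refine le_trans ?_ ((binom_mono (mu_nonneg _ _) mono (mu_le_one _ _) m (m * mu lam (hthr r m))).2.trans b2)
        have law := score_law (m := m) r hx hy (measurableSet_Ioi (a := m * mu lam (hthr r m)))
        simp only [Set.mem_Ioi] at law
        rw [← law]
        refine measure_mono fun ω hω => ?_
        rw [Set.mem_ofPred_eq, ← score_eq_sum (by omega)]
        have : ¬ score d m r x y ω ≤ muM r m lam := fun hc =>
          hω ⟨fun hc2 => absurd hc2 c1, fun _ => hc⟩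
        exact mul_lt_mul_of_pos_left (not_le.1 this) hm0
      · refine le_trans (le_of_eq ?_) zero_le
        convert measure_empty (μ := Prob d m)
        ext ω
        simp only [Set.mem_compl_iff, Set.mem_empty_iff_false, iff_false, not_not]
        exact ⟨fun h => absurd h c1, fun h => absurd h c2⟩
    refine (Finset.sum_le_sum fun i _ => each i).trans ?_
    rw [Finset.sum_const, Finset.card_univ, Fintype.card_fin, nsmul_eq_mul,
      ENNReal.ofReal_mul (Nat.cast_nonneg n), ENNReal.ofReal_natCast]
  have lim : Tendsto (fun G : ℝ => n * G) (𝓝[>] (gaussTail eta)) (𝓝 (n * gaussTail eta)) :=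
    ((continuous_const.mul continuous_id).tendsto _).mono_left nhdsWithin_le_nhds
  refine ge_of_tendsto lim ?_
  filter_upwards [self_mem_nhdsWithin] with G hG
  exact main G hG

end
end

section
/- Fix r ∈ (0,1), a unit vector x ∈ ℝ^d, and for each m ≥ 2 let k_m := Σ_{i=1}^m 1[⟨a_i,x⟩ ≥ h_m] be the number of nonzero entries of the mapped vector. Then E[k_m] = m·(1 - Φ(sqrt(2 r log m))), E[k_m] ≤ m^{1-r}/sqrt(4π r log m) for every m ≥ 2, and E[k_m] ~ m^{1-r}/sqrt(4π r log m) as m → ∞. -/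
open MeasureTheory ProbabilityTheory Filter Topology

noncomputable section

theorem aux_map_dotp {d : ℕ} (x : Fin d → ℝ) (hx : unitVec x) :
    Measure.map (fun a : Fin d → ℝ => dotp a x)
      (Measure.pi fun _ : Fin d => gaussianReal 0 1) = gaussianReal 0 1 := by
  have hm : Measurable (fun a : Fin d → ℝ => dotp a x) := by
    unfold dotp; fun_prop
  have : IsProbabilityMeasure (Measure.map (fun a : Fin d → ℝ => dotp a x)
      (Measure.pi fun _ : Fin d => gaussianReal 0 1)) :=
    Measure.isProbabilityMeasure_map hm.aemeasurable
  apply Measure.ext_of_charFun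
  ext t
  have h1 : ∀ s : ℝ, ∫ y : ℝ, Complex.exp (s * y * Complex.I) ∂(gaussianReal 0 1)
      = Complex.exp (- s ^ 2 / 2) := by
    intro s
    have := charFun_gaussianReal (μ := 0) (v := 1) s
    rw [charFun_apply_real] at this
    rw [this]; congr 1; push_cast; ring
  rw [charFun_gaussianReal, charFun_apply_real, integral_map hm.aemeasurable
    (by fun_prop)]
  have h2 : ∀ a : Fin d → ℝ, Complex.exp (t * (dotp a x : ℝ) * Complex.I)
      = ∏ j, Complex.exp (((t * x j : ℝ) : ℂ) * (a j : ℝ) * Complex.I) := by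
    intro a
    rw [← Complex.exp_sum]; congr 1
    unfold dotp; push_cast
    rw [Finset.mul_sum, Finset.sum_mul]
    refine Finset.sum_congr rfl fun j _ => by ring
  simp_rw [h2]
  rw [integral_fintype_prod_eq_prod (μ := fun _ : Fin d => gaussianReal 0 1)
    (fun j (y : ℝ) => Complex.exp (((t * x j : ℝ) : ℂ) * (y : ℝ) * Complex.I))]
  simp_rw [h1]
  rw [← Complex.exp_sum]; congr 1
  have hx' : (∑ j, (x j : ℂ) ^ 2) = 1 := by exact_mod_cast hx
  have : ∀ j, -(((t * x j : ℝ) : ℂ)) ^ 2 / 2 = (-(t : ℂ) ^ 2 / 2) * (x j : ℂ) ^ 2 := by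
    intro j; push_cast; ring
  simp_rw [this]
  rw [← Finset.mul_sum, hx']
  push_cast; ring

theorem aux_tail_phi (t : ℝ) : gaussTail t = 1 - Phi t := by
  unfold gaussTail Phi
  have : NullSingletonClass (gaussianReal 0 1) := nullSingletonClass_gaussianReal one_ne_zero
  have h : {z : ℝ | t ≤ z} =ᵐ[gaussianReal 0 1] Set.Ioi t := Ioi_ae_eq_Ici.symm
  rw [measure_congr h, ← Set.compl_Iic]
  exact probReal_compl_eq_one_sub measurableSet_Iic

theorem aux_expect {d : ℕ} (m : ℕ) (t : ℝ) (x : Fin d → ℝ) (hx : unitVec x) :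
    (∫ ω, (∑ i, if t ≤ dotp (ω i) x then (1 : ℝ) else 0) ∂(Prob d m))
      = m * gaussTail t := by
  have hm : Measurable (fun a : Fin d → ℝ => dotp a x) := by
    unfold dotp; fun_prop
  have hS : MeasurableSet {a : Fin d → ℝ | t ≤ dotp a x} := measurableSet_le measurable_const hm
  have hmi : Measurable (fun a : Fin d → ℝ => if t ≤ dotp a x then (1 : ℝ) else 0) :=
    Measurable.ite hS measurable_const measurable_const
  unfold Prob
  rw [integral_finsetSum]
  · have : ∀ i : Fin m, (∫ ω : Fin m → Fin d → ℝ, (if t ≤ dotp (ω i) x then (1 : ℝ) else 0)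
        ∂(Measure.pi fun _ => Measure.pi fun _ : Fin d => gaussianReal 0 1)) = gaussTail t := by
      intro i
      have hp := measurePreserving_eval
        (fun _ : Fin m => Measure.pi fun _ : Fin d => gaussianReal 0 1) i
      have h1 := integral_map (μ := Measure.pi fun _ : Fin m =>
          Measure.pi fun _ : Fin d => gaussianReal 0 1) hp.measurable.aemeasurable
        (f := fun a : Fin d → ℝ => if t ≤ dotp a x then (1 : ℝ) else 0)
        hmi.aestronglyMeasurable
      rw [hp.map_eq] at h1
      refine h1.symm.trans ?_
      have h2 : (fun a : Fin d → ℝ => if t ≤ dotp a x then (1 : ℝ) else 0)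
        = Set.indicator {a : Fin d → ℝ | t ≤ dotp a x} 1 := by
        ext a; simp [Set.indicator]
      rw [h2, integral_indicator_one hS]
      unfold gaussTail
      have h3 : (gaussianReal 0 1) {z : ℝ | t ≤ z}
          = (Measure.pi fun _ : Fin d => gaussianReal 0 1) {a : Fin d → ℝ | t ≤ dotp a x} := by
        conv_lhs => rw [← aux_map_dotp x hx]
        exact Measure.map_apply hm measurableSet_Ici
      rw [h3]
      rfl
    simp_rw [this]
    simp
  · intro i _
    refine Integrable.of_bound (C := 1) (hmi.comp (measurable_pi_apply i)).aestronglyMeasurable ?_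
    refine Eventually.of_forall fun ω => ?_
    split_ifs <;> simp

theorem aux_mills (t : ℝ) (ht : 0 < t) :
    gaussTail t ≤ gaussianPDFReal 0 1 t / t ∧
    gaussianPDFReal 0 1 t / t ≤ (1 + 1 / t ^ 2) * gaussTail t := by
  have hT : gaussTail t = ∫ z in Set.Ioi t, gaussianPDFReal 0 1 z := by
    unfold gaussTail
    rw [gaussianReal_apply_eq_integral 0 one_ne_zero,
      ENNReal.toReal_ofReal (integral_nonneg fun z => gaussianPDFReal_nonneg 0 1 z)]
    exact integral_Ici_eq_integral_Ioi
  have hd : ∀ z ∈ Set.Ici t, HasDerivAt (fun z => -(gaussianPDFReal 0 1 z / z))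
      ((1 + 1 / z ^ 2) * gaussianPDFReal 0 1 z) z := by
    intro z hz
    have hz0 : z ≠ 0 := (ht.trans_le hz).ne'
    have h1 : HasDerivAt (gaussianPDFReal 0 1) (- z * gaussianPDFReal 0 1 z) z := by
      rw [gaussianPDFReal_def]
      have h0 : HasDerivAt (fun z : ℝ => -(z - 0) ^ 2 / (2 * ((1 : NNReal) : ℝ))) (-z) z := by
        have := (((hasDerivAt_id z).sub_const 0).pow 2).neg.div_const (2 * ((1 : NNReal) : ℝ))
        exact this.congr_deriv (by simp; ring)
      exact ((h0.exp).const_mul _).congr_deriv (by ring)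
    refine (h1.div (hasDerivAt_id z) hz0).neg.congr_deriv ?_
    simp only [id]
    field_simp
    ring
  have hpos : ∀ z ∈ Set.Ioi t, 0 ≤ (1 + 1 / z ^ 2) * gaussianPDFReal 0 1 z := by
    intro z _
    have := gaussianPDFReal_nonneg 0 1 z
    positivity
  have hlim : Tendsto (fun z => -(gaussianPDFReal 0 1 z / z)) atTop (𝓝 0) := by
    have h : Tendsto (fun z : ℝ => (√(2 * Real.pi))⁻¹ / z) atTop (𝓝 0) :=
      tendsto_const_nhds.div_atTop tendsto_id
    have h' : Tendsto (fun z => gaussianPDFReal 0 1 z / z) atTop (𝓝 0) := by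
      refine squeeze_zero' ?_ ?_ h
      · filter_upwards [eventually_gt_atTop 0] with z hz
        exact div_nonneg (gaussianPDFReal_nonneg 0 1 z) hz.le
      · filter_upwards [eventually_gt_atTop 0] with z hz
        gcongr
        rw [gaussianPDFReal_def]
        simp only [NNReal.coe_one, mul_one]
        refine mul_le_of_le_one_right (by positivity) ?_
        rw [Real.exp_le_one_iff]
        nlinarith [sq_nonneg (z - 0)]
    simpa using h'.neg
  have hint := integrableOn_Ioi_deriv_of_nonneg' hd hpos hlim
  have hval := integral_Ioi_of_hasDerivAt_of_nonneg' hd hpos hlim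
  have hg : IntegrableOn (gaussianPDFReal 0 1) (Set.Ioi t) :=
    (integrable_gaussianPDFReal 0 1).integrableOn
  simp only [zero_sub, neg_neg] at hval
  rw [hT, ← hval]
  constructor
  · refine setIntegral_mono_on hg hint measurableSet_Ioi fun z _ => ?_
    have := gaussianPDFReal_nonneg 0 1 z
    have h2 : 0 ≤ 1 / z ^ 2 * gaussianPDFReal 0 1 z := by positivity
    linarith
  · rw [← integral_const_mul]
    refine setIntegral_mono_on hint (hg.const_mul _) measurableSet_Ioi fun z hz => ?_
    have := gaussianPDFReal_nonneg 0 1 z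
    have hz' : t ≤ z := le_of_lt hz
    gcongr

theorem aux_rhs (r : ℝ) (hr : 0 < r) (m : ℕ) (hm : 2 ≤ m) :
    (m : ℝ) * (gaussianPDFReal 0 1 (hthr r m) / hthr r m)
      = (m : ℝ) ^ (1 - r) / Real.sqrt (4 * Real.pi * r * Real.log m) := by
  have hm1 : (1 : ℝ) < m := by exact_mod_cast hm
  have hm0 : (0 : ℝ) < m := by linarith
  have hl : 0 < Real.log m := Real.log_pos hm1
  have h1 : Real.sqrt (4 * Real.pi * r * Real.log m)
      = Real.sqrt (2 * Real.pi) * hthr r m := by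
    unfold hthr
    rw [← Real.sqrt_mul (by positivity)]
    congr 1; ring
  have h2 : gaussianPDFReal 0 1 (hthr r m) = (Real.sqrt (2 * Real.pi))⁻¹ * (m : ℝ) ^ (-r) := by
    rw [gaussianPDFReal_def]
    simp only [NNReal.coe_one, mul_one, sub_zero]
    congr 1
    unfold hthr
    rw [Real.sq_sqrt (by positivity), Real.rpow_def_of_pos hm0]
    congr 1; ring
  rw [h1, h2, sub_eq_add_neg, Real.rpow_add hm0, Real.rpow_one]
  field_simp

theorem aux_hthr_pos (r : ℝ) (hr : 0 < r) (m : ℕ) (hm : 2 ≤ m) : 0 < hthr r m := by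
  have hm1 : (1 : ℝ) < m := by exact_mod_cast hm
  have hl : 0 < Real.log m := Real.log_pos hm1
  exact Real.sqrt_pos.mpr (by positivity)

/-- sparsity of the mapped vector: exact expectation, non-asymptotic
upper bound, and asymptotic equivalence. -/
theorem stmt14 {d : ℕ} (r : ℝ) (hr : r ∈ Set.Ioo (0 : ℝ) 1)
    (x : Fin d → ℝ) (hx : unitVec x) :
    (∀ m : ℕ, 2 ≤ m →
      (∫ ω, (∑ i, if hthr r m ≤ dotp (ω i) x then (1 : ℝ) else 0) ∂(Prob d m))
          = m * (1 - Phi (Real.sqrt (2 * r * Real.log m))) ∧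
      (∫ ω, (∑ i, if hthr r m ≤ dotp (ω i) x then (1 : ℝ) else 0) ∂(Prob d m))
          ≤ (m : ℝ) ^ (1 - r) / Real.sqrt (4 * Real.pi * r * Real.log m)) ∧
    Asymptotics.IsEquivalent atTop
      (fun m : ℕ => ∫ ω, (∑ i, if hthr r m ≤ dotp (ω i) x then (1 : ℝ) else 0) ∂(Prob d m))
      (fun m : ℕ => (m : ℝ) ^ (1 - r) / Real.sqrt (4 * Real.pi * r * Real.log m)) := by
  have hr0 : 0 < r := hr.1
  simp_rw [aux_expect _ _ x hx]
  refine ⟨fun m hm => ⟨?_, ?_⟩, ?_⟩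
  · rw [aux_tail_phi]; rfl
  · rw [← aux_rhs r hr0 m hm]
    gcongr
    exact (aux_mills _ (aux_hthr_pos r hr0 m hm)).1
  · have hup : ∀ m : ℕ, 2 ≤ m →
        0 < (m : ℝ) ^ (1 - r) / Real.sqrt (4 * Real.pi * r * Real.log m) := by
      intro m hm
      have hm1 : (1 : ℝ) < m := by exact_mod_cast hm
      have hl : 0 < Real.log m := Real.log_pos hm1
      positivity
    refine Asymptotics.isEquivalent_of_tendsto_one ?_
    have hinf : Tendsto (fun m : ℕ => (hthr r m) ^ 2) atTop atTop := by
      refine (tendsto_pow_atTop two_ne_zero).comp ?_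
      refine Real.tendsto_sqrt_atTop.comp ?_
      exact (Real.tendsto_log_atTop.comp tendsto_natCast_atTop_atTop).const_mul_atTop
        (by positivity)
    have hlow : Tendsto (fun m : ℕ => (1 + 1 / (hthr r m) ^ 2)⁻¹) atTop (𝓝 1) := by
      have h : Tendsto (fun m : ℕ => 1 / (hthr r m) ^ 2) atTop (𝓝 0) :=
        tendsto_const_nhds.div_atTop hinf
      have := (h.const_add 1).inv₀ (by norm_num)
      simpa using this
    refine tendsto_of_tendsto_of_tendsto_of_le_of_le' hlow tendsto_const_nhds ?_ ?_
    · filter_upwards [eventually_ge_atTop 2] with m hm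
      have hp := hup m hm
      have ht := aux_hthr_pos r hr0 m hm
      simp only [Pi.div_apply]
      rw [le_div_iff₀ hp, inv_mul_le_iff₀ (by positivity), ← aux_rhs r hr0 m hm]
      have := mul_le_mul_of_nonneg_left (aux_mills _ ht).2 (Nat.cast_nonneg (α := ℝ) m)
      linarith
    · filter_upwards [eventually_ge_atTop 2] with m hm
      simp only [Pi.div_apply]
      rw [div_le_one (hup m hm), ← aux_rhs r hr0 m hm]
      gcongr
      exact (aux_mills _ (aux_hthr_pos r hr0 m hm)).1

end
end
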